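/- For j = 0, 2, 4, 6, 8 and 10, the space S_{j,2}(Γ₂,ε) is zero. -/

import Mathlib

noncomputable section

open Matrix Complex Filter Topology

/-- The standard symplectic form matrix of size 4. -/
def J4 : Matrix (Fin 4) (Fin 4) ℤ := !![0,0,1,0; 0,0,0,1; -1,0,0,0; 0,-1,0,0]

/-- The Siegel modular group `Γ₂ = Sp(4,ℤ)`, as a set of 4×4 integer matrices. -/
def Sp4Z : Set (Matrix (Fin 4) (Fin 4) ℤ) := {γ | γᵀ * J4 * γ = J4}

/-- The principal congruence subgroup `Γ₂[2]` of level 2. -/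
def Sp4Z2 : Set (Matrix (Fin 4) (Fin 4) ℤ) :=
  {γ | γ ∈ Sp4Z ∧ ∀ i j, ((γ i j : ZMod 2) = if i = j then 1 else 0)}

/-- The Siegel upper half space of degree 2: symmetric 2×2 complex matrices with
positive definite imaginary part (encoded as functions `Fin 2 → Fin 2 → ℂ`). -/
def H2 : Set (Fin 2 → Fin 2 → ℂ) :=
  {τ | (Matrix.of τ).IsSymm ∧ (Matrix.of fun i j => (τ i j).im).PosDef}

/-- The four 2×2 blocks of a 4×4 integer matrix, as complex matrices. -/
def blk (γ : Matrix (Fin 4) (Fin 4) ℤ) (r s : Fin 2) : Matrix (Fin 2) (Fin 2) ℂ :=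
  Matrix.of fun i j =>
    ((γ ⟨2 * (r : ℕ) + (i : ℕ), by have h1 := r.isLt; have h2 := i.isLt; omega⟩
        ⟨2 * (s : ℕ) + (j : ℕ), by have h1 := s.isLt; have h2 := j.isLt; omega⟩ : ℤ) : ℂ)

/-- The factor `cτ + d`. -/
def den (γ : Matrix (Fin 4) (Fin 4) ℤ) (τ : Fin 2 → Fin 2 → ℂ) : Matrix (Fin 2) (Fin 2) ℂ :=
  blk γ 1 0 * Matrix.of τ + blk γ 1 1

/-- The action `γ·τ = (aτ+b)(cτ+d)⁻¹` of `Sp(4)` on the Siegel upper half space. -/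
def moeb (γ : Matrix (Fin 4) (Fin 4) ℤ) (τ : Fin 2 → Fin 2 → ℂ) : Fin 2 → Fin 2 → ℂ :=
  fun i j => ((blk γ 0 0 * Matrix.of τ + blk γ 0 1) * (den γ τ)⁻¹) i j

/-- Matrix coefficients of the `j`-th symmetric power of the standard representation of
`GL(2,ℂ)`, in the basis `x₁^(j-i) x₂^i`. -/
def symCoeff (j : ℕ) (m : Matrix (Fin 2) (Fin 2) ℂ) (l i : Fin (j + 1)) : ℂ :=
  (((Polynomial.C (m 0 0) + Polynomial.C (m 1 0) * Polynomial.X) ^ (j - (l : ℕ)) *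
    (Polynomial.C (m 0 1) + Polynomial.C (m 1 1) * Polynomial.X) ^ (l : ℕ)).coeff i)

/-- The `j`-th symmetric power `Sym^j(m)` acting on coordinate vectors. -/
def symAct (j : ℕ) (m : Matrix (Fin 2) (Fin 2) ℂ) (v : Fin (j + 1) → ℂ) : Fin (j + 1) → ℂ :=
  fun i => ∑ l, symCoeff j m l i * v l

lemma symAct_add (j : ℕ) (m : Matrix (Fin 2) (Fin 2) ℂ) (v w : Fin (j + 1) → ℂ) :
    symAct j m (v + w) = symAct j m v + symAct j m w := by
  funext i
  simp [symAct, mul_add, Finset.sum_add_distrib]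

lemma symAct_smul (j : ℕ) (m : Matrix (Fin 2) (Fin 2) ℂ) (a : ℂ) (v : Fin (j + 1) → ℂ) :
    symAct j m (a • v) = a • symAct j m v := by
  funext i
  simp only [symAct, Pi.smul_apply, smul_eq_mul, Finset.mul_sum]
  exact Finset.sum_congr rfl fun l _ => by ring

lemma symAct_zero (j : ℕ) (m : Matrix (Fin 2) (Fin 2) ℂ) : symAct j m 0 = 0 := by
  funext i; simp [symAct]

/-- The weight `(j,k)` automorphy action `Sym^j(m) ⊗ det(m)^k`. -/
def wt (j : ℕ) (k : ℤ) (m : Matrix (Fin 2) (Fin 2) ℂ) (v : Fin (j + 1) → ℂ) :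
    Fin (j + 1) → ℂ :=
  (m.det ^ k) • symAct j m v

lemma wt_add (j : ℕ) (k : ℤ) (m : Matrix (Fin 2) (Fin 2) ℂ) (v w : Fin (j + 1) → ℂ) :
    wt j k m (v + w) = wt j k m v + wt j k m w := by
  simp [wt, symAct_add, smul_add]

lemma wt_smul (j : ℕ) (k : ℤ) (m : Matrix (Fin 2) (Fin 2) ℂ) (a : ℂ) (v : Fin (j + 1) → ℂ) :
    wt j k m (a • v) = a • wt j k m v := by
  rw [wt, wt, symAct_smul, smul_comm]

lemma wt_zero (j : ℕ) (k : ℤ) (m : Matrix (Fin 2) (Fin 2) ℂ) : wt j k m 0 = 0 := by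
  simp [wt, symAct_zero]

/-- The slash operation `(F|γ)(τ) = Sym^j(cτ+d)⁻¹ det(cτ+d)⁻ᵏ F(γ·τ)`. -/
def slashS (j : ℕ) (k : ℤ) (γ : Matrix (Fin 4) (Fin 4) ℤ)
    (F : (Fin 2 → Fin 2 → ℂ) → (Fin (j + 1) → ℂ)) (τ : Fin 2 → Fin 2 → ℂ) :
    Fin (j + 1) → ℂ :=
  ((den γ τ).det ^ (-k)) • symAct j ((den γ τ)⁻¹) (F (moeb γ τ))

lemma slashS_add (j : ℕ) (k : ℤ) (γ : Matrix (Fin 4) (Fin 4) ℤ)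
    (F G : (Fin 2 → Fin 2 → ℂ) → (Fin (j + 1) → ℂ)) (τ : Fin 2 → Fin 2 → ℂ) :
    slashS j k γ (F + G) τ = slashS j k γ F τ + slashS j k γ G τ := by
  simp [slashS, symAct_add, smul_add]

lemma slashS_smul (j : ℕ) (k : ℤ) (γ : Matrix (Fin 4) (Fin 4) ℤ) (a : ℂ)
    (F : (Fin 2 → Fin 2 → ℂ) → (Fin (j + 1) → ℂ)) (τ : Fin 2 → Fin 2 → ℂ) :
    slashS j k γ (a • F) τ = a • slashS j k γ F τ := by
  simp only [slashS, Pi.smul_apply, symAct_smul]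
  rw [smul_comm]

lemma slashS_zero (j : ℕ) (k : ℤ) (γ : Matrix (Fin 4) (Fin 4) ℤ) (τ : Fin 2 → Fin 2 → ℂ) :
    slashS j k γ (0 : (Fin 2 → Fin 2 → ℂ) → (Fin (j + 1) → ℂ)) τ = 0 := by
  simp [slashS, symAct_zero]

/-- The diagonal point `diag(τ₁,τ₂)` of the Siegel upper half space. -/
def diagH (τ₁ τ₂ : ℂ) : Fin 2 → Fin 2 → ℂ :=
  fun i j => if i = j then (if i = 0 then τ₁ else τ₂) else 0

/-- `F` is a Siegel cusp form of degree 2 and weight `(j,k)` on `Γ`, with character `χ`: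
holomorphic on `ℍ₂`, transforming by `F(γ·τ) = χ(γ) Sym^j(cτ+d) det(cτ+d)^k F(τ)` for `γ ∈ Γ`,
with `(F|γ)(diag(τ₁,it)) → 0` as `t → ∞` for every `γ ∈ Γ₂`, and (normalization) vanishing
off `ℍ₂`. -/
def IsSiegelCuspForm (j : ℕ) (k : ℤ) (Γ : Set (Matrix (Fin 4) (Fin 4) ℤ))
    (χ : Matrix (Fin 4) (Fin 4) ℤ → ℂ)
    (F : (Fin 2 → Fin 2 → ℂ) → (Fin (j + 1) → ℂ)) : Prop :=
  DifferentiableOn ℂ F H2 ∧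
  (∀ γ ∈ Γ, ∀ τ ∈ H2, F (moeb γ τ) = χ γ • wt j k (den γ τ) (F τ)) ∧
  (∀ γ ∈ Sp4Z, ∀ τ₁ : ℂ, 0 < τ₁.im →
    Tendsto (fun t : ℝ => slashS j k γ F (diagH τ₁ (t * Complex.I))) atTop (𝓝 0)) ∧
  (∀ τ, τ ∉ H2 → F τ = 0)

/-- The space `S_{j,k}(Γ, χ)` of Siegel cusp forms of degree 2 and weight `(j,k)` on `Γ`
with character `χ`, as a complex vector space. -/
def SiegelCusp (j : ℕ) (k : ℤ) (Γ : Set (Matrix (Fin 4) (Fin 4) ℤ))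
    (χ : Matrix (Fin 4) (Fin 4) ℤ → ℂ) :
    Submodule ℂ ((Fin 2 → Fin 2 → ℂ) → (Fin (j + 1) → ℂ)) where
  carrier := {F | IsSiegelCuspForm j k Γ χ F}
  add_mem' := by
    rintro F G hF hG
    refine ⟨hF.1.add hG.1, ?_, ?_, ?_⟩
    · intro γ hγ τ hτ
      show F (moeb γ τ) + G (moeb γ τ) = χ γ • wt j k (den γ τ) (F τ + G τ)
      rw [wt_add, smul_add, hF.2.1 γ hγ τ hτ, hG.2.1 γ hγ τ hτ]
    · intro γ hγ τ₁ hτ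
      have h := (hF.2.2.1 γ hγ τ₁ hτ).add (hG.2.2.1 γ hγ τ₁ hτ)
      rw [add_zero] at h
      exact h.congr fun t => (slashS_add j k γ F G _).symm
    · intro τ hτ
      show F τ + G τ = 0
      rw [hF.2.2.2 τ hτ, hG.2.2.2 τ hτ, add_zero]
  zero_mem' := by
    refine ⟨?_, ?_, ?_, ?_⟩
    · exact differentiableOn_const 0
    · intro γ hγ τ hτ
      show (0 : Fin (j + 1) → ℂ) = χ γ • wt j k (den γ τ) 0
      rw [wt_zero, smul_zero]
    · intro γ hγ τ₁ hτ
      have : (fun t : ℝ => slashS j k γ (0 : (Fin 2 → Fin 2 → ℂ) → (Fin (j + 1) → ℂ))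
          (diagH τ₁ (t * Complex.I))) = fun _ => 0 := by
        funext t; exact slashS_zero j k γ _
      rw [this]
      exact tendsto_const_nhds
    · intro τ _; rfl
  smul_mem' := by
    rintro a F hF
    refine ⟨hF.1.const_smul a, ?_, ?_, ?_⟩
    · intro γ hγ τ hτ
      show a • F (moeb γ τ) = χ γ • wt j k (den γ τ) (a • F τ)
      rw [hF.2.1 γ hγ τ hτ, wt_smul, smul_comm]
    · intro γ hγ τ₁ hτ
      have h := (hF.2.2.1 γ hγ τ₁ hτ).const_smul a
      rw [smul_zero] at h
      exact h.congr fun t => (slashS_smul j k γ a F _).symm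
    · intro τ hτ
      show a • F τ = 0
      rw [hF.2.2.2 τ hτ, smul_zero]

/-- `ε` is (on `Γ₂`) the unique nontrivial homomorphism `Γ₂ → {±1}`. -/
def IsEps (ε : Matrix (Fin 4) (Fin 4) ℤ → ℂ) : Prop :=
  (∀ γ ∈ Sp4Z, ε γ = 1 ∨ ε γ = -1) ∧
  (∀ γ ∈ Sp4Z, ∀ δ ∈ Sp4Z, ε (γ * δ) = ε γ * ε δ) ∧
  (∃ γ ∈ Sp4Z, ε γ ≠ 1)

/-!
Let `F` have weight `(j, 2)` and character `ε`. Since `ε` takes the value `-1` on the elementary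
translations, `F` has a Fourier expansion over half-integral forms with odd coefficients, and the
Koecher principle leaves only the positive definite ones. On the diagonal, the squares of the first
coordinates of `F` are cusp forms of level one and weight less than `12`, hence zero. Combined with
the invariance of the coefficient at the minimal form `u² - uv + v²` under the dihedral stabilizer
of that form, this kills the minimal coefficients as long as `j ≤ 10`. All remaining terms decay so
fast that along `Re τ + w Im τ`, with `τ` reduced, the Phragmén–Lindelöf principle bounds `‖F τ‖`
by `exp (-0.258 π)` times the supremum of `‖F‖` at height `Im w = 0.9`. This gain exceeds the
factor `0.9 ^ (-7)` lost by the `Γ₂`-invariant norm of `F`. That norm is bounded and, by reduction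
theory, controlled by its values at reduced points, so it vanishes identically.
-/

open scoped MatrixGroups

/-! ### Elements of the Siegel modular group and the character `ε` -/

/-- The embedding `SL(2,ℤ) → Sp(4,ℤ)` acting on the first diagonal entry of `τ`. -/
def embedFst (A : SL(2, ℤ)) : Matrix (Fin 4) (Fin 4) ℤ :=
  !![A 0 0, 0, A 0 1, 0; 0, 1, 0, 0; A 1 0, 0, A 1 1, 0; 0, 0, 0, 1]

/-- The embedding `SL(2,ℤ) → Sp(4,ℤ)` acting on the second diagonal entry of `τ`. -/
def embedSnd (A : SL(2, ℤ)) : Matrix (Fin 4) (Fin 4) ℤ :=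
  !![1, 0, 0, 0; 0, A 0 0, 0, A 0 1; 0, 0, 1, 0; 0, A 1 0, 0, A 1 1]

/-- The Levi embedding `U ↦ diag(U, U⁻ᵀ)` of `GL(2,ℤ)`; since `det U = ±1` there, the inverse is
written as `det U • adjugate U`, which makes sense for every integral `U`. -/
def levi (U : Matrix (Fin 2) (Fin 2) ℤ) : Matrix (Fin 4) (Fin 4) ℤ :=
  !![U 0 0, U 0 1, 0, 0; U 1 0, U 1 1, 0, 0;
     0, 0, U.det * U 1 1, -U.det * U 1 0; 0, 0, -U.det * U 0 1, U.det * U 0 0]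

/-- The translation `τ ↦ τ + (a b; b c)`. -/
def translation (a b c : ℤ) : Matrix (Fin 4) (Fin 4) ℤ :=
  !![1, 0, a, b; 0, 1, b, c; 0, 0, 1, 0; 0, 0, 0, 1]

lemma mem_Sp4Z_iff (γ : Matrix (Fin 4) (Fin 4) ℤ) : γ ∈ Sp4Z ↔
    (γ 0 0 * γ 2 1 + γ 1 0 * γ 3 1 - γ 2 0 * γ 0 1 - γ 3 0 * γ 1 1 = 0 ∧
     γ 0 0 * γ 2 2 + γ 1 0 * γ 3 2 - γ 2 0 * γ 0 2 - γ 3 0 * γ 1 2 = 1 ∧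
     γ 0 0 * γ 2 3 + γ 1 0 * γ 3 3 - γ 2 0 * γ 0 3 - γ 3 0 * γ 1 3 = 0 ∧
     γ 0 1 * γ 2 2 + γ 1 1 * γ 3 2 - γ 2 1 * γ 0 2 - γ 3 1 * γ 1 2 = 0 ∧
     γ 0 1 * γ 2 3 + γ 1 1 * γ 3 3 - γ 2 1 * γ 0 3 - γ 3 1 * γ 1 3 = 1 ∧
     γ 0 2 * γ 2 3 + γ 1 2 * γ 3 3 - γ 2 2 * γ 0 3 - γ 3 2 * γ 1 3 = 0) := by
  simp only [Sp4Z, Set.mem_ofPred_eq, ← Matrix.ext_iff, Fin.forall_fin_succ, J4, Matrix.mul_apply,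
    Fin.sum_univ_four, Matrix.transpose_apply]
  simp only [of_apply, cons_val', cons_val_zero, cons_val_one, cons_val, cons_val_fin_one,
    Fin.succ_zero_eq_one, Fin.succ_one_eq_two, Fin.reduceSucc, IsEmpty.forall_iff]
  constructor
  · rintro ⟨⟨_, _, _, _, _⟩, ⟨_, _, _, _, _⟩, ⟨_, _, _, _, _⟩, _⟩
    refine ⟨?_, ?_, ?_, ?_, ?_, ?_⟩ <;> linarith
  · rintro ⟨h1, h2, h3, h4, h5, h6⟩
    refine ⟨⟨?_, ?_, ?_, ?_, trivial⟩, ⟨?_, ?_, ?_, ?_, trivial⟩, ⟨?_, ?_, ?_, ?_, trivial⟩,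
      ⟨?_, ?_, ?_, ?_, trivial⟩, trivial⟩ <;> linarith

lemma one_mem_Sp4Z : 1 ∈ Sp4Z := by
  simp [Sp4Z]

lemma mul_mem_Sp4Z {γ δ : Matrix (Fin 4) (Fin 4) ℤ} (hγ : γ ∈ Sp4Z) (hδ : δ ∈ Sp4Z) :
    γ * δ ∈ Sp4Z := by
  calc (γ * δ)ᵀ * J4 * (γ * δ) = δᵀ * (γᵀ * J4 * γ) * δ := by
        simp only [Matrix.transpose_mul, Matrix.mul_assoc]
    _ = J4 := by rw [show γᵀ * J4 * γ = J4 from hγ, show δᵀ * J4 * δ = J4 from hδ]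

lemma SL2Z_det_eq_one (A : SL(2, ℤ)) : A 0 0 * A 1 1 - A 0 1 * A 1 0 = 1 := by
  rw [← det_fin_two, A.det_coe]

lemma embedFst_mem_Sp4Z (A : SL(2, ℤ)) : embedFst A ∈ Sp4Z := by
  have := SL2Z_det_eq_one A
  rw [mem_Sp4Z_iff]
  simp [embedFst]
  linarith

lemma embedSnd_mem_Sp4Z (A : SL(2, ℤ)) : embedSnd A ∈ Sp4Z := by
  have := SL2Z_det_eq_one A
  rw [mem_Sp4Z_iff]
  simp [embedSnd]
  linarith

lemma levi_mem_Sp4Z {U : Matrix (Fin 2) (Fin 2) ℤ} (hU : U.det * U.det = 1) : levi U ∈ Sp4Z := by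
  have hdet := det_fin_two U
  rw [mem_Sp4Z_iff]
  simp only [levi, of_apply, cons_val', cons_val_zero, cons_val_one, cons_val, cons_val_fin_one]
  refine ⟨?_, ?_, ?_, ?_, ?_, ?_⟩ <;> grind

lemma translation_mem_Sp4Z (a b c : ℤ) : translation a b c ∈ Sp4Z := by
  simp [mem_Sp4Z_iff, translation]

lemma embedFst_one : embedFst 1 = 1 := by decide

lemma embedSnd_one : embedSnd 1 = 1 := by decide

lemma levi_one : levi 1 = 1 := by decide

lemma embedFst_mul (A B : SL(2, ℤ)) : embedFst (A * B) = embedFst A * embedFst B := by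
  ext i j
  fin_cases i <;> fin_cases j <;> simp [embedFst, Matrix.mul_apply, Fin.sum_univ_succ]

lemma embedSnd_mul (A B : SL(2, ℤ)) : embedSnd (A * B) = embedSnd A * embedSnd B := by
  ext i j
  fin_cases i <;> fin_cases j <;> simp [embedSnd, Matrix.mul_apply, Fin.sum_univ_succ]

lemma levi_mul (U V : Matrix (Fin 2) (Fin 2) ℤ) : levi (U * V) = levi U * levi V := by
  ext i j
  fin_cases i <;> fin_cases j <;>
    simp [levi, Matrix.mul_apply, Fin.sum_univ_succ] <;> ring

lemma exists_SL2Z_mul_eq_zero (a c : ℤ) : ∃ A : SL(2, ℤ), A 1 0 * a + A 1 1 * c = 0 := by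
  by_cases h : Int.gcd a c = 0
  · obtain ⟨rfl, rfl⟩ := Int.gcd_eq_zero_iff.1 h
    exact ⟨1, by simp⟩
  · obtain ⟨g, a', c', -, hcop, rfl, rfl⟩ := Int.exists_gcd_one' (Nat.pos_of_ne_zero h)
    obtain ⟨A, hA⟩ := (Int.isCoprime_iff_gcd_eq_one.2 hcop).symm.neg_left.exists_SL2_row 1
    refine ⟨A, ?_⟩
    rw [hA.1, hA.2]
    ring

lemma monoidHom_SL2Z_eq_one {M : Type*} [CommMonoid M] (f : SL(2, ℤ) →* M)
    (hT : f ModularGroup.T = 1) : f = 1 := by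
  have hS : f ModularGroup.S = 1 := by
    have hrel : (ModularGroup.S * ModularGroup.T) ^ 3 = ModularGroup.S ^ 2 := by decide
    have hfrel : f ModularGroup.S ^ 3 = f ModularGroup.S ^ 2 := by
      simpa only [map_pow, map_mul, hT, mul_one] using congrArg f hrel
    calc f ModularGroup.S
        = f ModularGroup.S ^ 3 * f ModularGroup.S⁻¹ ^ 2 := by
          rw [← map_pow, ← map_pow, ← map_mul]; congr 1; group
      _ = 1 := by rw [hfrel, ← map_pow, ← map_pow, ← map_mul]; simp
  refine MonoidHom.eq_of_eqOn_dense SpecialLinearGroup.SL2Z_generators ?_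
  rintro A (rfl | rfl)
  exacts [hS, hT]

section Generators

variable {K : Submonoid (Matrix (Fin 4) (Fin 4) ℤ)} (hfst : ∀ A, embedFst A ∈ K)
  (hsnd : ∀ A, embedSnd A ∈ K) (hlevi : ∀ U : SL(2, ℤ), levi U ∈ K)
  (htrans : ∀ b, translation 0 b 0 ∈ K) {γ : Matrix (Fin 4) (Fin 4) ℤ}

include hfst in
lemma mem_of_embedFst_mul_mem (A : SL(2, ℤ)) (h : embedFst A * γ ∈ K) : γ ∈ K := by
  have := K.mul_mem (hfst A⁻¹) h
  rwa [← Matrix.mul_assoc, ← embedFst_mul, inv_mul_cancel, embedFst_one, Matrix.one_mul] at this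

include hsnd in
lemma mem_of_embedSnd_mul_mem (A : SL(2, ℤ)) (h : embedSnd A * γ ∈ K) : γ ∈ K := by
  have := K.mul_mem (hsnd A⁻¹) h
  rwa [← Matrix.mul_assoc, ← embedSnd_mul, inv_mul_cancel, embedSnd_one, Matrix.one_mul] at this

include hlevi in
lemma mem_of_levi_mul_mem (A : SL(2, ℤ)) (h : levi A * γ ∈ K) : γ ∈ K := by
  have hinv : levi (A⁻¹ : SL(2, ℤ)) * levi A = 1 := by
    rw [← levi_mul, ← A⁻¹.coe_mul, inv_mul_cancel]
    exact levi_one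
  simpa only [← Matrix.mul_assoc, hinv, Matrix.one_mul] using K.mul_mem (hlevi A⁻¹) h

include hfst hlevi htrans in
lemma mem_of_unitriangular (hγ : γ ∈ Sp4Z) (h00 : γ 0 0 = 1) (h10 : γ 1 0 = 0)
    (h20 : γ 2 0 = 0) (h30 : γ 3 0 = 0) (h11 : γ 1 1 = 1) (h31 : γ 3 1 = 0)
    (h13 : γ 1 3 = 0) (h33 : γ 3 3 = 1) : γ ∈ K := by
  obtain ⟨r1, r2, r3, r4, -, r6⟩ := (mem_Sp4Z_iff γ).1 hγ
  simp only [h00, h10, h20, h30, h11, h31, h13, h33] at r1 r2 r3 r4 r6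
  have h21 : γ 2 1 = 0 := by linarith
  have h22 : γ 2 2 = 1 := by linarith
  have h23 : γ 2 3 = 0 := by linarith
  simp only [h21, h22, h23] at r4 r6
  have h32 : γ 3 2 = -γ 0 1 := by linarith
  have h12 : γ 1 2 = γ 0 3 := by linarith
  let T (n : ℤ) : SL(2, ℤ) := ModularGroup.T ^ n
  have hγ_eq : γ = levi (T (γ 0 1)) *
      (embedFst (T (γ 0 2 - γ 0 1 * γ 0 3)) * translation 0 (γ 0 3) 0) := by
    ext i j
    fin_cases i <;> fin_cases j <;>
      simp [T, levi, embedFst, translation, ModularGroup.coe_T_zpow, Matrix.mul_apply,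
        Fin.sum_univ_succ, *]
  rw [hγ_eq]
  exact K.mul_mem (hlevi _) (K.mul_mem (hfst _) (htrans _))

include hfst hsnd hlevi htrans in
lemma mem_of_firstCol_eq (hγ : γ ∈ Sp4Z) (h00 : γ 0 0 = 1) (h10 : γ 1 0 = 0)
    (h20 : γ 2 0 = 0) (h30 : γ 3 0 = 0) : γ ∈ K := by
  obtain ⟨r1, -, r3, -, r5, -⟩ := (mem_Sp4Z_iff γ).1 hγ
  simp only [h00, h10, h20, h30] at r1 r3
  have h21 : γ 2 1 = 0 := by linarith
  have h23 : γ 2 3 = 0 := by linarith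
  have hdet : γ 1 1 * γ 3 3 - γ 1 3 * γ 3 1 = 1 := by simp only [h21, h23] at r5; linarith
  let A : SL(2, ℤ) := ⟨!![γ 3 3, -γ 1 3; -γ 3 1, γ 1 1], by rw [det_fin_two_of]; linarith⟩
  apply mem_of_embedSnd_mul_mem hsnd A
  apply mem_of_unitriangular hfst hlevi htrans (mul_mem_Sp4Z (embedSnd_mem_Sp4Z A) hγ) <;>
    simp [A, embedSnd, Matrix.mul_apply, Fin.sum_univ_succ, h00, h10, h20, h30] <;> linarith

include hfst hsnd hlevi htrans in
lemma mem_of_firstCol_eq_zero (hγ : γ ∈ Sp4Z) (h10 : γ 1 0 = 0) (h20 : γ 2 0 = 0)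
    (h30 : γ 3 0 = 0) : γ ∈ K := by
  have h00 : γ 0 0 * γ 2 2 = 1 := by
    have := ((mem_Sp4Z_iff γ).1 hγ).2.1
    rw [h10, h20, h30] at this
    linarith
  rcases Int.eq_one_or_neg_one_of_mul_eq_one h00 with h | h
  · exact mem_of_firstCol_eq hfst hsnd hlevi htrans hγ h h10 h20 h30
  · apply mem_of_embedFst_mul_mem hfst (-1)
    apply mem_of_firstCol_eq hfst hsnd hlevi htrans (mul_mem_Sp4Z (embedFst_mem_Sp4Z _) hγ) <;>
      simp [embedFst, Matrix.mul_apply, Fin.sum_univ_succ, *]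

include hfst hsnd hlevi htrans in
lemma mem_of_lower_firstCol_eq_zero (hγ : γ ∈ Sp4Z) (h20 : γ 2 0 = 0) (h30 : γ 3 0 = 0) :
    γ ∈ K := by
  obtain ⟨A, hA⟩ := exists_SL2Z_mul_eq_zero (γ 0 0) (γ 1 0)
  apply mem_of_levi_mul_mem hlevi A
  apply mem_of_firstCol_eq_zero hfst hsnd hlevi htrans
    (mul_mem_Sp4Z (levi_mem_Sp4Z (by simp)) hγ)
  · simpa [levi, Matrix.mul_apply, Fin.sum_univ_succ] using hA
  all_goals simp [levi, Matrix.mul_apply, Fin.sum_univ_succ, h20, h30]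

include hfst hsnd hlevi htrans in
theorem mem_of_mem_Sp4Z (hγ : γ ∈ Sp4Z) : γ ∈ K := by
  obtain ⟨A, hA⟩ := exists_SL2Z_mul_eq_zero (γ 0 0) (γ 2 0)
  obtain ⟨B, hB⟩ := exists_SL2Z_mul_eq_zero (γ 1 0) (γ 3 0)
  apply mem_of_embedFst_mul_mem hfst A
  apply mem_of_embedSnd_mul_mem hsnd B
  apply mem_of_lower_firstCol_eq_zero hfst hsnd hlevi htrans
    (mul_mem_Sp4Z (embedSnd_mem_Sp4Z B) (mul_mem_Sp4Z (embedFst_mem_Sp4Z A) hγ))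
  · simpa [embedFst, embedSnd, Matrix.mul_apply, Fin.sum_univ_four, -Matrix.cons_mul] using hA
  · simpa [embedFst, embedSnd, Matrix.mul_apply, Fin.sum_univ_four, -Matrix.cons_mul] using hB

end Generators

namespace IsEps

variable {ε : Matrix (Fin 4) (Fin 4) ℤ → ℂ} {γ δ : Matrix (Fin 4) (Fin 4) ℤ}

lemma map_mul (hε : IsEps ε) (hγ : γ ∈ Sp4Z) (hδ : δ ∈ Sp4Z) : ε (γ * δ) = ε γ * ε δ :=
  hε.2.1 γ hγ δ hδ

lemma map_mul_self (hε : IsEps ε) (hγ : γ ∈ Sp4Z) : ε γ * ε γ = 1 := by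
  rcases hε.1 γ hγ with h | h <;> simp [h]

lemma ne_zero (hε : IsEps ε) (hγ : γ ∈ Sp4Z) : ε γ ≠ 0 :=
  left_ne_zero_of_mul_eq_one (hε.map_mul_self hγ)

lemma norm_eq_one (hε : IsEps ε) (hγ : γ ∈ Sp4Z) : ‖ε γ‖ = 1 := by
  rcases hε.1 γ hγ with h | h <;> simp [h]

lemma map_one (hε : IsEps ε) : ε 1 = 1 := by
  simpa [hε.map_mul_self one_mem_Sp4Z] using hε.map_mul one_mem_Sp4Z one_mem_Sp4Z

lemma eq_of_semiconj (hε : IsEps ε) {g : Matrix (Fin 4) (Fin 4) ℤ} (hg : g ∈ Sp4Z)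
    (hγ : γ ∈ Sp4Z) (hδ : δ ∈ Sp4Z) (h : g * γ = δ * g) : ε γ = ε δ := by
  apply mul_left_cancel₀ (hε.ne_zero hg)
  rw [← hε.map_mul hg hγ, h, hε.map_mul hδ hg, mul_comm]

lemma embedSnd_T (hε : IsEps ε) : ε (embedSnd ModularGroup.T) = ε (embedFst ModularGroup.T) :=
  hε.eq_of_semiconj (levi_mem_Sp4Z (U := !![0, 1; 1, 0]) (by decide)) (embedSnd_mem_Sp4Z _)
    (embedFst_mem_Sp4Z _) (by decide)

lemma translation_offDiag (hε : IsEps ε) :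
    ε (translation 0 1 0) = ε (embedFst ModularGroup.T) := by
  have hconj : ε (translation 1 1 1) = ε (embedFst ModularGroup.T) :=
    hε.eq_of_semiconj (levi_mem_Sp4Z (U := !![1, 0; -1, 1]) (by decide))
      (translation_mem_Sp4Z _ _ _) (embedFst_mem_Sp4Z _) (by decide)
  have hprod : translation 1 1 1 = embedFst ModularGroup.T *
      (embedSnd ModularGroup.T * translation 0 1 0) := by decide
  have hfst := embedFst_mem_Sp4Z ModularGroup.T
  have hsnd := embedSnd_mem_Sp4Z ModularGroup.T
  have htr := translation_mem_Sp4Z 0 1 0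
  rwa [hprod, hε.map_mul hfst (mul_mem_Sp4Z hsnd htr), hε.map_mul hsnd htr, hε.embedSnd_T,
    ← mul_assoc, hε.map_mul_self hfst, one_mul] at hconj

lemma translation_offDiag_eq_levi (hε : IsEps ε) (b : ℤ) :
    ε (translation 0 b 0) = ε (levi !![1, b; 0, 1]) := by
  refine hε.eq_of_semiconj (embedSnd_mem_Sp4Z ⟨!![0, 1; -1, 0], by decide⟩)
    (translation_mem_Sp4Z _ _ _) (levi_mem_Sp4Z (by simp)) ?_
  ext i j
  fin_cases i <;> fin_cases j <;> simp [levi, embedSnd, translation, Matrix.mul_apply,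
    Fin.sum_univ_succ]

lemma eq_one_of_map_T (hε : IsEps ε) {f : SL(2, ℤ) → Matrix (Fin 4) (Fin 4) ℤ}
    (hf : ∀ A, f A ∈ Sp4Z) (hf_one : f 1 = 1) (hf_mul : ∀ A B, f (A * B) = f A * f B)
    (hT : ε (f ModularGroup.T) = 1) (A : SL(2, ℤ)) : ε (f A) = 1 := by
  let φ : SL(2, ℤ) →* ℂ :=
    { toFun := fun A => ε (f A)
      map_one' := by rw [hf_one, hε.map_one]
      map_mul' := fun A B => by rw [hf_mul, hε.map_mul (hf A) (hf B)] }
  exact DFunLike.congr_fun (monoidHom_SL2Z_eq_one φ hT) A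

theorem embedFst_T (hε : IsEps ε) : ε (embedFst ModularGroup.T) = -1 := by
  refine (hε.1 _ (embedFst_mem_Sp4Z _)).resolve_left fun hT => ?_
  have hlevi_mem (A : SL(2, ℤ)) : levi A ∈ Sp4Z := levi_mem_Sp4Z (by simp)
  have hfst := hε.eq_one_of_map_T embedFst_mem_Sp4Z embedFst_one embedFst_mul hT
  have hsnd := hε.eq_one_of_map_T embedSnd_mem_Sp4Z embedSnd_one embedSnd_mul
    (hε.embedSnd_T.trans hT)
  have hlevi := hε.eq_one_of_map_T hlevi_mem levi_one (fun A B => levi_mul A B)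
    ((hε.translation_offDiag_eq_levi 1).symm.trans (hε.translation_offDiag.trans hT))
  have htrans (b : ℤ) : ε (translation 0 b 0) = 1 := by
    rw [hε.translation_offDiag_eq_levi, ← hlevi (ModularGroup.T ^ b), ModularGroup.coe_T_zpow]
  let K : Submonoid (Matrix (Fin 4) (Fin 4) ℤ) :=
    { carrier := {γ | γ ∈ Sp4Z ∧ ε γ = 1}
      one_mem' := ⟨one_mem_Sp4Z, hε.map_one⟩
      mul_mem' := fun hγ hδ =>
        ⟨mul_mem_Sp4Z hγ.1 hδ.1, by rw [hε.map_mul hγ.1 hδ.1, hγ.2, hδ.2, one_mul]⟩ }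
  obtain ⟨γ, hγ, hγ_ne⟩ := hε.2.2
  have hγK : γ ∈ K := mem_of_mem_Sp4Z (K := K) (fun A => ⟨embedFst_mem_Sp4Z A, hfst A⟩)
    (fun A => ⟨embedSnd_mem_Sp4Z A, hsnd A⟩) (fun A => ⟨hlevi_mem A, hlevi A⟩)
    (fun b => ⟨translation_mem_Sp4Z 0 b 0, htrans b⟩) hγ
  exact hγ_ne hγK.2

lemma translation_fst (hε : IsEps ε) : ε (translation 1 0 0) = -1 :=
  (congrArg ε (by decide)).trans hε.embedFst_T

lemma translation_snd (hε : IsEps ε) : ε (translation 0 0 1) = -1 :=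
  (congrArg ε (by decide)).trans (hε.embedSnd_T.trans hε.embedFst_T)

lemma levi_diag (hε : IsEps ε) : ε (levi !![1, 0; 0, -1]) = 1 := by
  have hsq : levi !![1, 0; 0, -1] = embedSnd ModularGroup.S * embedSnd ModularGroup.S := by decide
  have hS := embedSnd_mem_Sp4Z ModularGroup.S
  rw [hsq, hε.map_mul hS hS, hε.map_mul_self hS]

lemma levi_rotation (hε : IsEps ε) : ε (levi !![0, -1; 1, -1]) = 1 := by
  have hmem : levi !![0, -1; 1, -1] ∈ Sp4Z := levi_mem_Sp4Z (by decide)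
  have hcube : levi !![0, -1; 1, -1] * levi !![0, -1; 1, -1] * levi !![0, -1; 1, -1] = 1 := by
    decide
  simpa [hε.map_mul, mul_mem_Sp4Z, hmem, hε.map_mul_self hmem, hε.map_one] using congrArg ε hcube

end IsEps

/-! ### The action on the Siegel upper half space -/

section HalfSpace

variable {γ δ : Matrix (Fin 4) (Fin 4) ℤ} {τ : Fin 2 → Fin 2 → ℂ}

/-- The imaginary part of `τ`, with entries regarded as complex numbers. -/
def imMatrix (τ : Fin 2 → Fin 2 → ℂ) : Matrix (Fin 2) (Fin 2) ℂ :=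
  Matrix.of fun i j => ((τ i j).im : ℂ)

/-- The determinant of the imaginary part of a symmetric `τ`. -/
def imDet (τ : Fin 2 → Fin 2 → ℂ) : ℝ := (τ 0 0).im * (τ 1 1).im - (τ 0 1).im ^ 2

/-- The trace of the imaginary part of `τ`. -/
def imTrace (τ : Fin 2 → Fin 2 → ℂ) : ℝ := (τ 0 0).im + (τ 1 1).im

/-- The Hermitian form `(x, y) ↦ (x, y) adj(Im τ) (x̄, ȳ)ᵗ` of the adjugate of `Im τ`; it transforms
under `Γ₂` by the factor of automorphy acting on `(x, y)`. -/
def imForm (τ : Fin 2 → Fin 2 → ℂ) (x y : ℂ) : ℝ :=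
  (τ 1 1).im * normSq x - 2 * (τ 0 1).im * (x * (starRingEnd ℂ) y).re + (τ 0 0).im * normSq y

lemma posDef_fin_two_iff {Y : Matrix (Fin 2) (Fin 2) ℝ} (hY : Y.IsSymm) :
    Y.PosDef ↔ 0 < Y 0 0 ∧ 0 < Y.det := by
  refine ⟨fun h => ⟨h.diag_pos, h.det_pos⟩, fun ⟨h0, hdet⟩ => ?_⟩
  have hsymm : Y 1 0 = Y 0 1 := hY.apply 0 1
  rw [det_fin_two, hsymm] at hdet
  refine PosDef.of_dotProduct_mulVec_pos
    (by rwa [IsHermitian, conjTranspose_eq_transpose_of_trivial]) fun x hx => ?_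
  have hsq : Y 0 0 * (star x ⬝ᵥ Y *ᵥ x) =
      (Y 0 0 * x 0 + Y 0 1 * x 1) ^ 2 + (Y 0 0 * Y 1 1 - Y 0 1 * Y 0 1) * x 1 ^ 2 := by
    simp only [mulVec, dotProduct, Fin.sum_univ_two, Pi.star_apply, star_trivial, hsymm]
    ring
  refine pos_of_mul_pos_right (hsq ▸ ?_) h0.le
  rcases eq_or_ne (x 1) 0 with h1 | h1
  · have hx0 : x 0 ≠ 0 := fun hx0 => hx (funext fun i => by fin_cases i <;> assumption)
    simp only [h1, mul_zero, add_zero, zero_pow two_ne_zero]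
    positivity
  · positivity

lemma mem_H2_iff : τ ∈ H2 ↔ τ 1 0 = τ 0 1 ∧ 0 < (τ 0 0).im ∧ 0 < imDet τ := by
  have hsymm : (of τ).IsSymm ↔ τ 1 0 = τ 0 1 := by
    simp [Matrix.IsSymm.ext_iff, Fin.forall_fin_two, eq_comm]
  rw [H2, Set.mem_ofPred_eq, hsymm]
  refine and_congr_right fun h => ?_
  rw [posDef_fin_two_iff (IsSymm.ext fun i j => by fin_cases i <;> fin_cases j <;> simp [h])]
  simp [det_fin_two, imDet, h, pow_two]

lemma symm_of_mem_H2 (hτ : τ ∈ H2) : τ 1 0 = τ 0 1 := (mem_H2_iff.1 hτ).1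

lemma im_fst_pos (hτ : τ ∈ H2) : 0 < (τ 0 0).im := (mem_H2_iff.1 hτ).2.1

lemma imDet_pos (hτ : τ ∈ H2) : 0 < imDet τ := (mem_H2_iff.1 hτ).2.2

lemma im_snd_pos (hτ : τ ∈ H2) : 0 < (τ 1 1).im := by
  refine pos_of_mul_pos_right ?_ (im_fst_pos hτ).le
  linarith [imDet_pos hτ, imDet.eq_1 τ, sq_nonneg (τ 0 1).im]

lemma imTrace_pos (hτ : τ ∈ H2) : 0 < imTrace τ := add_pos (im_fst_pos hτ) (im_snd_pos hτ)

lemma imDet_mul_le_imTrace_mul_imForm (τ : Fin 2 → Fin 2 → ℂ) (x y : ℂ) :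
    imDet τ * (normSq x + normSq y) ≤ imTrace τ * imForm τ x y := by
  have hsq : imTrace τ * imForm τ x y - imDet τ * (normSq x + normSq y) =
      normSq ((τ 1 1).im * x - (τ 0 1).im * y) + normSq ((τ 0 0).im * y - (τ 0 1).im * x) := by
    simp only [imDet, imTrace, imForm, normSq_apply, mul_re, conj_re, conj_im, sub_re, sub_im,
      mul_im, ofReal_re, ofReal_im]
    ring
  linarith [normSq_nonneg ((τ 1 1).im * x - (τ 0 1).im * y),
    normSq_nonneg ((τ 0 0).im * y - (τ 0 1).im * x)]

lemma imForm_pos (hτ : τ ∈ H2) {x y : ℂ} (hxy : x ≠ 0 ∨ y ≠ 0) : 0 < imForm τ x y := by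
  have hsum : 0 < normSq x + normSq y := by
    rcases hxy with h | h
    · exact add_pos_of_pos_of_nonneg (normSq_pos.2 h) (normSq_nonneg _)
    · exact add_pos_of_nonneg_of_pos (normSq_nonneg _) (normSq_pos.2 h)
  refine pos_of_mul_pos_right ?_ (imTrace_pos hτ).le
  exact (mul_pos (imDet_pos hτ) hsum).trans_le (imDet_mul_le_imTrace_mul_imForm τ x y)

lemma blk_mul (γ δ : Matrix (Fin 4) (Fin 4) ℤ) (r s : Fin 2) :
    blk (γ * δ) r s = blk γ r 0 * blk δ 0 s + blk γ r 1 * blk δ 1 s := by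
  ext i j
  fin_cases r <;> fin_cases s <;> fin_cases i <;> fin_cases j <;>
    simp [blk, Matrix.mul_apply, Fin.sum_univ_four, Fin.sum_univ_two] <;> ring

lemma conjTranspose_blk (γ : Matrix (Fin 4) (Fin 4) ℤ) (r s : Fin 2) :
    (blk γ r s)ᴴ = (blk γ r s)ᵀ := by
  ext i j
  simp [blk]

/-- The factor `aτ + b`. -/
def num (γ : Matrix (Fin 4) (Fin 4) ℤ) (τ : Fin 2 → Fin 2 → ℂ) : Matrix (Fin 2) (Fin 2) ℂ :=
  blk γ 0 0 * Matrix.of τ + blk γ 0 1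

lemma blk_J4 (r s : Fin 2) :
    blk J4 r s = (!![0, 1; -1, 0] r s : ℂ) • (1 : Matrix (Fin 2) (Fin 2) ℂ) := by
  ext i j
  fin_cases r <;> fin_cases s <;> fin_cases i <;> fin_cases j <;> simp [blk, J4]

lemma blk_transpose_mul_sub (hγ : γ ∈ Sp4Z) (r s : Fin 2) :
    (blk γ 0 r)ᵀ * blk γ 1 s - (blk γ 1 r)ᵀ * blk γ 0 s = blk J4 r s := by
  have hT (r s : Fin 2) : blk γᵀ r s = (blk γ s r)ᵀ := rfl
  rw [← show γᵀ * J4 * γ = J4 from hγ, Matrix.mul_assoc, blk_mul, blk_mul, blk_mul, hT, hT]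
  simp [blk_J4, sub_eq_add_neg]

lemma num_transpose_mul_den_sub (hγ : γ ∈ Sp4Z) (σ τ : Fin 2 → Fin 2 → ℂ) :
    (num γ σ)ᵀ * den γ τ - (den γ σ)ᵀ * num γ τ = (of σ)ᵀ - of τ := by
  have hexpand : (num γ σ)ᵀ * den γ τ - (den γ σ)ᵀ * num γ τ =
      (of σ)ᵀ * ((blk γ 0 0)ᵀ * blk γ 1 0 - (blk γ 1 0)ᵀ * blk γ 0 0) * of τ +
      (of σ)ᵀ * ((blk γ 0 0)ᵀ * blk γ 1 1 - (blk γ 1 0)ᵀ * blk γ 0 1) +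
      ((blk γ 0 1)ᵀ * blk γ 1 0 - (blk γ 1 1)ᵀ * blk γ 0 0) * of τ +
      ((blk γ 0 1)ᵀ * blk γ 1 1 - (blk γ 1 1)ᵀ * blk γ 0 1) := by
    simp only [num, den, transpose_add, transpose_mul]
    noncomm_ring
  rw [hexpand]
  simp [blk_transpose_mul_sub hγ, blk_J4, sub_eq_add_neg]

lemma num_transpose_mul_den (hγ : γ ∈ Sp4Z) (hτ : τ ∈ H2) :
    (num γ τ)ᵀ * den γ τ = (den γ τ)ᵀ * num γ τ := by
  rw [← sub_eq_zero, num_transpose_mul_den_sub hγ, sub_eq_zero]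
  exact hτ.1

lemma conjTranspose_sub_self (hτ : τ 1 0 = τ 0 1) :
    (of τ)ᴴ - of τ = (-(2 * I)) • imMatrix τ := by
  ext i j
  fin_cases i <;> fin_cases j <;> apply Complex.ext <;> simp [imMatrix, hτ] <;> ring

lemma num_conjTranspose_mul_den_sub (hγ : γ ∈ Sp4Z) (τ : Fin 2 → Fin 2 → ℂ) :
    (num γ τ)ᴴ * den γ τ - (den γ τ)ᴴ * num γ τ = (of τ)ᴴ - of τ := by
  let σ : Fin 2 → Fin 2 → ℂ := fun i j => star (τ i j)
  have hσ : (of σ)ᵀ = (of τ)ᴴ := rfl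
  have hnum : (num γ τ)ᴴ = (num γ σ)ᵀ := by
    simp only [num, conjTranspose_add, transpose_add, conjTranspose_mul, transpose_mul,
      conjTranspose_blk, hσ]
  have hden : (den γ τ)ᴴ = (den γ σ)ᵀ := by
    simp only [den, conjTranspose_add, transpose_add, conjTranspose_mul, transpose_mul,
      conjTranspose_blk, hσ]
  rw [hnum, hden, num_transpose_mul_den_sub hγ, hσ]

lemma dotProduct_imMatrix_mulVec (hτ : τ 1 0 = τ 0 1) (v : Fin 2 → ℂ) :
    star v ⬝ᵥ imMatrix τ *ᵥ v = imForm τ (v 1) (-v 0) := by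
  apply Complex.ext <;>
    simp [imMatrix, mulVec, dotProduct, Fin.sum_univ_two, hτ, imForm, normSq_apply] <;> ring

lemma det_den_ne_zero (hγ : γ ∈ Sp4Z) (hτ : τ ∈ H2) : (den γ τ).det ≠ 0 := by
  intro hdet
  obtain ⟨v, hv, hDv⟩ := exists_mulVec_eq_zero_iff.2 hdet
  have hzero : star v ⬝ᵥ ((num γ τ)ᴴ * den γ τ - (den γ τ)ᴴ * num γ τ) *ᵥ v = 0 := by
    rw [sub_mulVec, ← mulVec_mulVec, hDv, ← mulVec_mulVec, dotProduct_sub,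
      dotProduct_mulVec _ (den γ τ)ᴴ, ← star_mulVec, hDv]
    simp
  rw [num_conjTranspose_mul_den_sub hγ, conjTranspose_sub_self (symm_of_mem_H2 hτ), smul_mulVec,
    dotProduct_smul, dotProduct_imMatrix_mulVec (symm_of_mem_H2 hτ)] at hzero
  refine (imForm_pos hτ (x := v 1) (y := -v 0) ?_).ne' (by simpa using hzero)
  contrapose! hv
  ext i
  fin_cases i
  exacts [neg_eq_zero.1 hv.2, hv.1]

lemma isUnit_det_den (hγ : γ ∈ Sp4Z) (hτ : τ ∈ H2) : IsUnit (den γ τ).det :=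
  isUnit_iff_ne_zero.2 (det_den_ne_zero hγ hτ)

lemma moeb_mul_den (hγ : γ ∈ Sp4Z) (hτ : τ ∈ H2) : of (moeb γ τ) * den γ τ = num γ τ :=
  nonsing_inv_mul_cancel_right _ _ (isUnit_det_den hγ hτ)

lemma moeb_symm (hγ : γ ∈ Sp4Z) (hτ : τ ∈ H2) : moeb γ τ 1 0 = moeb γ τ 0 1 := by
  have hsymm : (den γ τ)ᵀ * (of (moeb γ τ))ᵀ * den γ τ = (den γ τ)ᵀ * of (moeb γ τ) * den γ τ := by
    rw [← transpose_mul, Matrix.mul_assoc, moeb_mul_den hγ hτ, num_transpose_mul_den hγ hτ]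
  have hD := isUnit_det_den hγ hτ
  have hD' : IsUnit (den γ τ)ᵀ.det := by rwa [det_transpose]
  have h := ((isUnit_iff_isUnit_det _).2 hD').mul_left_cancel
    (((isUnit_iff_isUnit_det _).2 hD).mul_right_cancel hsymm)
  exact congrFun₂ h 0 1

lemma den_conjTranspose_mul_imMatrix_mul_den (hγ : γ ∈ Sp4Z) (hτ : τ ∈ H2) :
    (den γ τ)ᴴ * imMatrix (moeb γ τ) * den γ τ = imMatrix τ := by
  have h := num_conjTranspose_mul_den_sub hγ τ
  rw [← moeb_mul_den hγ hτ, conjTranspose_sub_self (symm_of_mem_H2 hτ), conjTranspose_mul,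
    Matrix.mul_assoc, ← Matrix.mul_sub, ← Matrix.sub_mul,
    conjTranspose_sub_self (moeb_symm hγ hτ), Matrix.smul_mul, Matrix.mul_smul,
    ← Matrix.mul_assoc] at h
  exact smul_right_injective _ (by simp : -(2 * I) ≠ 0) h

lemma det_imMatrix (hτ : τ 1 0 = τ 0 1) : (imMatrix τ).det = imDet τ := by
  rw [det_fin_two, imDet]
  simp [imMatrix, hτ, pow_two]

lemma imDet_moeb (hγ : γ ∈ Sp4Z) (hτ : τ ∈ H2) :
    imDet (moeb γ τ) * normSq (den γ τ).det = imDet τ := by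
  have h := congrArg Matrix.det (den_conjTranspose_mul_imMatrix_mul_den hγ hτ)
  rw [det_mul, det_mul, det_conjTranspose, det_imMatrix (symm_of_mem_H2 hτ),
    det_imMatrix (moeb_symm hγ hτ), mul_right_comm, mul_comm] at h
  rw [← ofReal_inj, ← h, ofReal_mul, ← mul_conj, mul_comm (den γ τ).det]
  rfl

lemma imForm_moeb (hγ : γ ∈ Sp4Z) (hτ : τ ∈ H2) (x y : ℂ) :
    imForm (moeb γ τ) x y * normSq (den γ τ).det =
      imForm τ (den γ τ 0 0 * x + den γ τ 1 0 * y) (den γ τ 0 1 * x + den γ τ 1 1 * y) := by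
  set D := den γ τ with hD
  let v : Fin 2 → ℂ := ![-(D 0 1 * x + D 1 1 * y), D 0 0 * x + D 1 0 * y]
  have hDv : D *ᵥ v = D.det • ![-y, x] := by
    ext i
    fin_cases i <;> simp [v, mulVec, dotProduct, det_fin_two] <;> ring
  have hτv : star v ⬝ᵥ imMatrix τ *ᵥ v =
      imForm τ (D 0 0 * x + D 1 0 * y) (D 0 1 * x + D 1 1 * y) := by
    rw [dotProduct_imMatrix_mulVec (symm_of_mem_H2 hτ)]
    simp [v, -neg_add_rev]
  rw [← ofReal_inj, ← hτv, ← den_conjTranspose_mul_imMatrix_mul_den hγ hτ, ← hD, ← mulVec_mulVec,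
    ← mulVec_mulVec, dotProduct_mulVec _ Dᴴ, ← star_mulVec, hDv, mulVec_smul, star_smul,
    smul_dotProduct, dotProduct_smul, dotProduct_imMatrix_mulVec (moeb_symm hγ hτ), ofReal_mul,
    ← mul_conj]
  simp
  ring

lemma moeb_mem_H2 (hγ : γ ∈ Sp4Z) (hτ : τ ∈ H2) : moeb γ τ ∈ H2 := by
  have hn : 0 < normSq (den γ τ).det := normSq_pos.2 (det_den_ne_zero hγ hτ)
  refine mem_H2_iff.2 ⟨moeb_symm hγ hτ, ?_, pos_of_mul_pos_left ?_ hn.le⟩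
  · have hform : imForm (moeb γ τ) 0 1 = (moeb γ τ 0 0).im := by simp [imForm]
    refine hform ▸ pos_of_mul_pos_left ?_ hn.le
    rw [imForm_moeb hγ hτ]
    refine imForm_pos hτ ?_
    by_contra! h
    refine det_den_ne_zero hγ hτ ?_
    rw [det_fin_two]
    linear_combination den γ τ 0 0 * h.2 - den γ τ 0 1 * h.1
  · rw [imDet_moeb hγ hτ]
    exact imDet_pos hτ

lemma num_mul (γ : Matrix (Fin 4) (Fin 4) ℤ) (hδ : δ ∈ Sp4Z) (hτ : τ ∈ H2) :
    num (γ * δ) τ = num γ (moeb δ τ) * den δ τ := by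
  rw [num, num, Matrix.add_mul, Matrix.mul_assoc, moeb_mul_den hδ hτ, blk_mul, blk_mul, num, den]
  noncomm_ring

lemma den_mul (γ : Matrix (Fin 4) (Fin 4) ℤ) (hδ : δ ∈ Sp4Z) (hτ : τ ∈ H2) :
    den (γ * δ) τ = den γ (moeb δ τ) * den δ τ := by
  rw [den, den, Matrix.add_mul, Matrix.mul_assoc, moeb_mul_den hδ hτ, blk_mul, blk_mul, num, den]
  noncomm_ring

lemma moeb_mul (γ : Matrix (Fin 4) (Fin 4) ℤ) (hδ : δ ∈ Sp4Z) (hτ : τ ∈ H2) :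
    moeb (γ * δ) τ = moeb γ (moeb δ τ) := by
  change num (γ * δ) τ * (den (γ * δ) τ)⁻¹ = num γ (moeb δ τ) * (den γ (moeb δ τ))⁻¹
  rw [num_mul γ hδ hτ, den_mul γ hδ hτ, Matrix.mul_inv_rev, ← Matrix.mul_assoc,
    mul_nonsing_inv_cancel_right _ _ (isUnit_det_den hδ hτ)]

lemma den_levi (U : Matrix (Fin 2) (Fin 2) ℤ) (τ : Fin 2 → Fin 2 → ℂ) :
    den (levi U) τ = (U.det : ℂ) • !![(U 1 1 : ℂ), -U 1 0; -U 0 1, U 0 0] := by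
  ext i j
  fin_cases i <;> fin_cases j <;> simp [den, blk, levi, Matrix.mul_apply]

lemma moeb_levi {U : Matrix (Fin 2) (Fin 2) ℤ} (hU : U.det * U.det = 1)
    (τ : Fin 2 → Fin 2 → ℂ) :
    of (moeb (levi U) τ) = U.map Int.cast * of τ * (U.map Int.cast)ᵀ := by
  have hinv : (den (levi U) τ)⁻¹ = (U.map Int.cast)ᵀ := by
    refine inv_eq_right_inv ?_
    have hU' : (U.det * (U 0 0 * U 1 1 - U 0 1 * U 1 0) : ℂ) = 1 := by
      exact_mod_cast (congrArg (U.det * ·) (det_fin_two U).symm).trans hU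
    rw [den_levi]
    ext i j
    fin_cases i <;> fin_cases j <;> simp [Matrix.mul_apply, Fin.sum_univ_two] <;> grind
  have hnum : num (levi U) τ = U.map Int.cast * of τ := by
    ext i j
    fin_cases i <;> fin_cases j <;> simp [num, blk, levi, Matrix.mul_apply, Fin.sum_univ_two]
  change num (levi U) τ * (den (levi U) τ)⁻¹ = _
  rw [hnum, hinv]

lemma den_translation (a b c : ℤ) (τ : Fin 2 → Fin 2 → ℂ) : den (translation a b c) τ = 1 := by
  ext i j
  fin_cases i <;> fin_cases j <;> simp [den, blk, translation, Matrix.mul_apply]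

lemma moeb_translation (a b c : ℤ) (τ : Fin 2 → Fin 2 → ℂ) :
    moeb (translation a b c) τ = ![![τ 0 0 + a, τ 0 1 + b], ![τ 1 0 + b, τ 1 1 + c]] := by
  funext i j
  rw [moeb, den_translation, inv_one, Matrix.mul_one]
  fin_cases i <;> fin_cases j <;> simp [blk, translation, Matrix.mul_apply, Fin.sum_univ_two]

end HalfSpace

/-! ### Reduction theory -/

section Reduction

variable {γ δ : Matrix (Fin 4) (Fin 4) ℤ} {τ : Fin 2 → Fin 2 → ℂ}

/-- Minkowski reduction of the quadratic form `Im τ`. -/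
def IsMinkowskiReduced (τ : Fin 2 → Fin 2 → ℂ) : Prop :=
  2 * |(τ 0 1).im| ≤ (τ 0 0).im ∧ (τ 0 0).im ≤ (τ 1 1).im

/-- A set of points meeting every `Γ₂`-orbit in `ℍ₂`: the imaginary part is Minkowski reduced and
its minimum is at least `0.86`, a number slightly smaller than `√3 / 2`. -/
def reducedSet : Set (Fin 2 → Fin 2 → ℂ) :=
  {τ | τ ∈ H2 ∧ IsMinkowskiReduced τ ∧ 0.86 ≤ (τ 0 0).im}

lemma IsMinkowskiReduced.im_mul_im_le (hred : IsMinkowskiReduced τ) :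
    (τ 0 0).im * (τ 1 1).im ≤ 4 / 3 * imDet τ := by
  obtain ⟨hoff, hle⟩ := hred
  have hsq : (τ 0 1).im ^ 2 ≤ ((τ 0 0).im / 2) ^ 2 :=
    sq_le_sq' (by linarith [neg_abs_le (τ 0 1).im]) (by linarith [le_abs_self (τ 0 1).im])
  rw [imDet]
  nlinarith [abs_nonneg (τ 0 1).im]

lemma imDet_moeb_levi {U : Matrix (Fin 2) (Fin 2) ℤ} (hU : U.det * U.det = 1) (hτ : τ ∈ H2) :
    imDet (moeb (levi U) τ) = imDet τ := by
  have hdet : normSq (den (levi U) τ).det = 1 := by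
    have hU' : (U.det * U.det : ℝ) = 1 := by exact_mod_cast hU
    have hden : (den (levi U) τ).det = (U.det : ℝ) := by
      have hU'' : (U.det * U.det : ℂ) = 1 := by exact_mod_cast hU
      have hexp : (U.det : ℂ) = U 0 0 * U 1 1 - U 0 1 * U 1 0 := by exact_mod_cast det_fin_two U
      rw [den_levi, det_smul, det_fin_two_of, Fintype.card_fin, ofReal_intCast]
      linear_combination (U 0 0 * U 1 1 - U 0 1 * U 1 0 : ℂ) * hU'' - hexp
    rw [hden, normSq_ofReal, hU']
  rw [← imDet_moeb (levi_mem_Sp4Z hU) hτ, hdet, mul_one]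

/-- If `z` is the root in the upper half plane attached to the quadratic form `Im τ`, then
`Im τ` is, up to the scalar `Im τ₀₀`, the norm form of the lattice spanned by `1` and `z`. -/
lemma im_moeb_levi {U : Matrix (Fin 2) (Fin 2) ℤ} (hU : U.det * U.det = 1) (hτ : τ ∈ H2) {z : ℂ}
    (hre : (τ 0 0).im * z.re = (τ 0 1).im) (hnorm : (τ 0 0).im * normSq z = (τ 1 1).im)
    (i k : Fin 2) : (moeb (levi U) τ i k).im =
      (τ 0 0).im * ((U i 0 + U i 1 * z) * (starRingEnd ℂ) (U k 0 + U k 1 * z)).re := by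
  have h := congrArg im (congrFun₂ (moeb_levi hU τ) i k)
  have hsymm := congrArg im (symm_of_mem_H2 hτ)
  rw [normSq_apply] at hnorm
  simp only [of_apply, Matrix.mul_apply, Fin.sum_univ_two, map_apply, transpose_apply, add_im,
    mul_im, intCast_re, intCast_im, zero_mul, mul_zero, add_zero, zero_add, hsymm] at h
  simp only [h, map_add, map_mul, map_intCast, mul_re, add_re, intCast_re, add_im, mul_im,
    intCast_im, conj_re, conj_im, zero_mul, sub_zero, zero_add, add_zero]
  linear_combination (-(U i 0 * U k 1 + U i 1 * U k 0) : ℝ) * hre - (U i 1 * U k 1 : ℝ) * hnorm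

lemma exists_isMinkowskiReduced (hτ : τ ∈ H2) :
    ∃ γ ∈ Sp4Z, imDet (moeb γ τ) = imDet τ ∧ IsMinkowskiReduced (moeb γ τ) := by
  have ha := im_fst_pos hτ
  have hd := imDet_pos hτ
  let z : UpperHalfPlane :=
    ⟨⟨(τ 0 1).im / (τ 0 0).im, √(imDet τ) / (τ 0 0).im⟩, div_pos (Real.sqrt_pos.2 hd) ha⟩
  have hre : (τ 0 0).im * (z : ℂ).re = (τ 0 1).im := mul_div_cancel₀ _ ha.ne'
  have hnorm : (τ 0 0).im * normSq z = (τ 1 1).im := by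
    have hsq : √(imDet τ) ^ 2 = (τ 0 0).im * (τ 1 1).im - (τ 0 1).im ^ 2 := Real.sq_sqrt hd.le
    simp only [normSq_apply, z]
    field_simp
    linear_combination hsq
  obtain ⟨g, hg⟩ := ModularGroup.exists_smul_mem_fd z
  let U : Matrix (Fin 2) (Fin 2) ℤ := !![g 1 1, g 1 0; g 0 1, g 0 0]
  have hU : U.det * U.det = 1 := by
    have hdet : U.det = 1 := by
      rw [det_fin_two_of]
      linear_combination SL2Z_det_eq_one g
    rw [hdet, one_mul]
  let w (i : Fin 2) : ℂ := U i 0 + U i 1 * z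
  have hw0 : 0 < normSq (w 0) := by
    convert UpperHalfPlane.normSq_denom_pos g z.im_ne_zero using 2
    rw [ModularGroup.denom_apply]
    exact add_comm _ _
  have hgz : ((g • z : UpperHalfPlane) : ℂ) = w 1 / w 0 := by
    rw [UpperHalfPlane.specialLinearGroup_apply]
    simp [w, U, add_comm]
  obtain ⟨hnormle, hreal⟩ := hg
  rw [UpperHalfPlane.re, hgz, div_re, ← add_div, abs_div, abs_of_pos hw0,
    div_le_iff₀ hw0] at hreal
  rw [hgz, normSq_div, le_div_iff₀ hw0, one_mul] at hnormle
  refine ⟨levi U, levi_mem_Sp4Z hU, imDet_moeb_levi hU hτ, ?_⟩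
  have him := im_moeb_levi hU hτ hre hnorm
  have hdiag (i : Fin 2) : (moeb (levi U) τ i i).im = (τ 0 0).im * normSq (w i) := by
    rw [him, mul_conj, ofReal_re]
  rw [IsMinkowskiReduced, hdiag, hdiag, him, abs_mul, abs_of_pos ha, mul_left_comm]
  constructor
  · have hconj : (w 0 * (starRingEnd ℂ) (w 1)).re = (w 1).re * (w 0).re + (w 1).im * (w 0).im := by
      simp
      ring
    rw [hconj]
    gcongr
    linarith
  · gcongr

lemma imDet_sq_mul_le (hτ : τ ∈ H2) (x y : ℝ) :
    imDet τ ^ 2 * (x ^ 2 + y ^ 2) ≤ imTrace τ ^ 2 *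
      ((x * (τ 0 0).im + y * (τ 0 1).im) ^ 2 + (x * (τ 0 1).im + y * (τ 1 1).im) ^ 2) := by
  set u := x * (τ 0 0).im + y * (τ 0 1).im with hu
  set v := x * (τ 0 1).im + y * (τ 1 1).im with hv
  have hdecomp : imTrace τ ^ 2 * (u ^ 2 + v ^ 2) = imDet τ ^ 2 * (x ^ 2 + y ^ 2) +
      2 * imDet τ * (u ^ 2 + v ^ 2) + ((τ 1 1).im * v + (τ 0 1).im * u) ^ 2 +
      ((τ 0 0).im * u + (τ 0 1).im * v) ^ 2 := by
    rw [hu, hv, imTrace, imDet]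
    ring
  have := imDet_pos hτ
  rw [hdecomp, add_assoc, add_assoc]
  exact le_add_of_nonneg_right (by positivity)

lemma one_le_sq_add_sq {m n : ℤ} (h : m ≠ 0 ∨ n ≠ 0) : (1 : ℝ) ≤ (m : ℝ) ^ 2 + (n : ℝ) ^ 2 := by
  have : 0 < m ^ 2 + n ^ 2 := by rcases h with h | h <;> positivity
  exact_mod_cast this

lemma den_apply (γ : Matrix (Fin 4) (Fin 4) ℤ) (τ : Fin 2 → Fin 2 → ℂ) (i k : Fin 2) :
    den γ τ i k =
      γ (i.addNat 2) 0 * τ 0 k + γ (i.addNat 2) 1 * τ 1 k + γ (i.addNat 2) (k.addNat 2) := by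
  fin_cases i <;> fin_cases k <;> simp [den, blk, Matrix.mul_apply, Fin.sum_univ_two]

lemma min_le_normSq_den_row (hγ : γ ∈ Sp4Z) (hτ : τ ∈ H2) (i : Fin 2) :
    min 1 ((imDet τ / imTrace τ) ^ 2) ≤ normSq (den γ τ i 0) + normSq (den γ τ i 1) := by
  have hsymm := symm_of_mem_H2 hτ
  by_cases hrow : γ (i.addNat 2) 0 = 0 ∧ γ (i.addNat 2) 1 = 0
  · have hden (k : Fin 2) : den γ τ i k = γ (i.addNat 2) (k.addNat 2) := by
      simp [den_apply, hrow.1, hrow.2]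
    have hne : γ (i.addNat 2) 2 ≠ 0 ∨ γ (i.addNat 2) 3 ≠ 0 := by
      by_contra! h
      refine det_den_ne_zero hγ hτ (det_eq_zero_of_row_eq_zero i fun k => ?_)
      fin_cases k <;> simp [hden, h.1, h.2]
    refine (min_le_left _ _).trans ((one_le_sq_add_sq hne).trans_eq ?_)
    simp [hden, normSq_intCast, pow_two]
  · refine (min_le_right _ _).trans ?_
    rw [div_pow, div_le_iff₀ (pow_pos (imTrace_pos hτ) 2), mul_comm (_ + _)]
    refine (le_mul_of_one_le_right (sq_nonneg _) (one_le_sq_add_sq (not_and_or.1 hrow))).trans ?_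
    refine (imDet_sq_mul_le hτ _ _).trans ?_
    gcongr
    · refine le_of_eq_of_le ?_ (im_sq_le_normSq (den γ τ i 0))
      simp [den_apply, hsymm, pow_two]
    · refine le_of_eq_of_le ?_ (im_sq_le_normSq (den γ τ i 1))
      simp [den_apply, pow_two]

lemma im_moeb_diag (hγ : γ ∈ Sp4Z) (hτ : τ ∈ H2) (i : Fin 2) :
    (moeb γ τ i i).im * normSq (den γ τ).det =
      imForm τ (den γ τ i.rev 0) (den γ τ i.rev 1) := by
  fin_cases i
  · simpa [imForm] using imForm_moeb hγ hτ 0 1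
  · simpa [imForm] using imForm_moeb hγ hτ 1 0

lemma imDet_moeb_mul_le (hγ : γ ∈ Sp4Z) (hτ : τ ∈ H2) (i : Fin 2) :
    imDet (moeb γ τ) * min 1 ((imDet τ / imTrace τ) ^ 2) ≤ imTrace τ * (moeb γ τ i i).im := by
  refine le_of_mul_le_mul_right ?_ (normSq_pos.2 (det_den_ne_zero hγ hτ))
  calc imDet (moeb γ τ) * min 1 ((imDet τ / imTrace τ) ^ 2) * normSq (den γ τ).det
      = imDet τ * min 1 ((imDet τ / imTrace τ) ^ 2) := by
        rw [mul_right_comm, imDet_moeb hγ hτ]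
    _ ≤ imDet τ * (normSq (den γ τ i.rev 0) + normSq (den γ τ i.rev 1)) :=
        mul_le_mul_of_nonneg_left (min_le_normSq_den_row hγ hτ i.rev) (imDet_pos hτ).le
    _ ≤ imTrace τ * imForm τ (den γ τ i.rev 0) (den γ τ i.rev 1) :=
        imDet_mul_le_imTrace_mul_imForm τ _ _
    _ = imTrace τ * (moeb γ τ i i).im * normSq (den γ τ).det := by
        rw [mul_assoc, im_moeb_diag hγ hτ]

lemma bddAbove_imDet_orbit (hτ : τ ∈ H2) : BddAbove ((fun γ => imDet (moeb γ τ)) '' Sp4Z) := by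
  set m := min 1 ((imDet τ / imTrace τ) ^ 2)
  have hd := imDet_pos hτ
  have ht := imTrace_pos hτ
  have : 0 < m := lt_min one_pos (by positivity)
  refine ⟨4 / 3 * (imTrace τ / m) ^ 2, ?_⟩
  rintro _ ⟨γ, hγ, rfl⟩
  obtain ⟨δ, hδ, hdet, hred⟩ := exists_isMinkowskiReduced (moeb_mem_H2 hγ hτ)
  rw [← moeb_mul δ hγ hτ] at hdet hred
  have hδγ := mul_mem_Sp4Z hδ hγ
  have hmem := moeb_mem_H2 hδγ hτ
  have hpos := imDet_pos hmem
  have hle (i : Fin 2) : imDet (moeb (δ * γ) τ) * (m / imTrace τ) ≤ (moeb (δ * γ) τ i i).im := by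
    rw [← mul_div_assoc, div_le_iff₀' ht]
    exact imDet_moeb_mul_le hδγ hτ i
  have hprod := (mul_le_mul (hle 0) (hle 1) (by positivity) (im_fst_pos hmem).le).trans
    hred.im_mul_im_le
  simp only [← hdet]
  rw [div_pow, ← mul_div_assoc, le_div_iff₀ (by positivity)]
  refine le_of_mul_le_mul_left ?_ hpos
  field_simp at hprod ⊢
  linarith

lemma det_den_embedFst_S (τ : Fin 2 → Fin 2 → ℂ) :
    (den (embedFst ModularGroup.S) τ).det = τ 0 0 := by
  rw [det_fin_two]
  simp [den, blk, embedFst, ModularGroup.S, Matrix.mul_apply, Fin.sum_univ_two]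

lemma exists_translation_abs_re_le (τ : Fin 2 → Fin 2 → ℂ) : ∃ a : ℤ,
    |(moeb (translation a 0 0) τ 0 0).re| ≤ 1 / 2 := by
  refine ⟨-round (τ 0 0).re, ?_⟩
  simpa [moeb_translation, ← sub_eq_add_neg] using abs_sub_round (τ 0 0).re

/-- Since the heights `imDet` of the points of an orbit need not be known to attain their supremum,
we settle for a point whose height exceeds `99 / 100` of it. -/
lemma exists_height_almost_maximal (hτ : τ ∈ H2) : ∃ γ ∈ Sp4Z, IsMinkowskiReduced (moeb γ τ) ∧
    |(moeb γ τ 0 0).re| ≤ 1 / 2 ∧ ∀ δ ∈ Sp4Z, 0.99 * imDet (moeb δ τ) < imDet (moeb γ τ) := by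
  set S : Set ℝ := (fun γ => imDet (moeb γ τ)) '' Sp4Z
  have hbdd : BddAbove S := bddAbove_imDet_orbit hτ
  have hne : S.Nonempty := ⟨_, 1, one_mem_Sp4Z, rfl⟩
  have hpos : 0 < sSup S :=
    (imDet_pos (moeb_mem_H2 one_mem_Sp4Z hτ)).trans_le (le_csSup hbdd ⟨1, one_mem_Sp4Z, rfl⟩)
  obtain ⟨_, ⟨γ, hγ, rfl⟩, hlt⟩ :=
    exists_lt_of_lt_csSup hne (show 0.99 * sSup S < sSup S by linarith)
  obtain ⟨δ, hδ, hdet, hred⟩ := exists_isMinkowskiReduced (moeb_mem_H2 hγ hτ)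
  obtain ⟨a, ha⟩ := exists_translation_abs_re_le (moeb δ (moeb γ τ))
  have hδγ := mul_mem_Sp4Z hδ hγ
  refine ⟨translation a 0 0 * (δ * γ), mul_mem_Sp4Z (translation_mem_Sp4Z _ _ _) hδγ, ?_⟩
  rw [moeb_mul _ hδγ hτ, moeb_mul δ hγ hτ]
  refine ⟨?_, ha, fun η hη => ?_⟩
  · simpa [IsMinkowskiReduced, moeb_translation] using hred
  · calc 0.99 * imDet (moeb η τ) ≤ 0.99 * sSup S := by
          gcongr
          exact le_csSup hbdd ⟨η, hη, rfl⟩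
      _ < imDet (moeb γ τ) := hlt
      _ = imDet (moeb δ (moeb γ τ)) := hdet.symm
      _ = _ := by simp [imDet, moeb_translation]

lemma exists_moeb_mem_reducedSet (hτ : τ ∈ H2) : ∃ γ ∈ Sp4Z, moeb γ τ ∈ reducedSet := by
  obtain ⟨γ, hγ, hred, hre, hmax⟩ := exists_height_almost_maximal hτ
  have hmem := moeb_mem_H2 hγ hτ
  refine ⟨γ, hγ, hmem, hred, ?_⟩
  set q := moeb γ τ 0 0
  have hS := embedFst_mem_Sp4Z ModularGroup.S
  have hheight : 0.99 < normSq q := by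
    have hlt := hmax _ (mul_mem_Sp4Z hS hγ)
    rw [moeb_mul _ hγ hτ, ← imDet_moeb hS hmem, det_den_embedFst_S, mul_comm] at hlt
    exact lt_of_mul_lt_mul_left hlt (imDet_pos (moeb_mem_H2 hS hmem)).le
  have hre_sq : q.re * q.re ≤ 1 / 4 := by
    have := abs_le.1 hre
    nlinarith [this.1, this.2]
  have hy : 0 < q.im := im_fst_pos hmem
  rw [normSq_apply] at hheight
  nlinarith

end Reduction

/-! ### Binary forms -/

section BinaryForms

open Polynomial (X C)

variable {j : ℕ}

/-- The value at `(x, y)` of the binary form `∑ i, vᵢ x^(j-i) y^i` of degree `j` with coefficient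
vector `v`, as a continuous linear functional of `v`. -/
def evalForm (x y : ℂ) : (Fin (j + 1) → ℂ) →L[ℂ] ℂ :=
  ∑ i : Fin (j + 1), (x ^ (j - i : ℕ) * y ^ (i : ℕ)) • ContinuousLinearMap.proj i

lemma evalForm_apply (x y : ℂ) (v : Fin (j + 1) → ℂ) :
    evalForm x y v = ∑ i : Fin (j + 1), v i * (x ^ (j - i : ℕ) * y ^ (i : ℕ)) := by
  simp [evalForm, mul_comm]

lemma sum_coeff_mul_eq_eval_homogenize (p : Polynomial ℂ) (x y : ℂ) :
    ∑ i : Fin (j + 1), p.coeff i * (x ^ (j - i : ℕ) * y ^ (i : ℕ)) =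
      MvPolynomial.eval ![y, x] (p.homogenize j) := by
  rw [Polynomial.homogenize, map_sum, Finset.Nat.sum_antidiagonal_eq_sum_range_succ_mk,
    Finset.sum_range]
  refine Finset.sum_congr rfl fun i _ => ?_
  rw [MvPolynomial.eval_monomial, Finsupp.prod_fintype _ _ (by simp)]
  simp [mul_comm]

lemma eval_homogenize_linear_pow (a b x y : ℂ) (n : ℕ) :
    MvPolynomial.eval ![y, x] (((C a + C b * X) ^ n).homogenize n) = (a * x + b * y) ^ n := by
  have hdeg : (C a + C b * X).natDegree ≤ 1 := by compute_degree
  have hpow := Polynomial.homogenize_finsetProd (s := Finset.range n)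
    (p := fun _ => C a + C b * X) (n := fun _ => 1) fun _ _ => hdeg
  simp only [Finset.prod_const, Finset.sum_const, Finset.card_range, smul_eq_mul, mul_one] at hpow
  rw [hpow, map_pow]
  simp

lemma evalForm_symAct (m : Matrix (Fin 2) (Fin 2) ℂ) (v : Fin (j + 1) → ℂ) (x y : ℂ) :
    evalForm x y (symAct j m v) =
      evalForm (m 0 0 * x + m 1 0 * y) (m 0 1 * x + m 1 1 * y) v := by
  have hcoeff (l : Fin (j + 1)) :
      ∑ i, symCoeff j m l i * (x ^ (j - i : ℕ) * y ^ (i : ℕ)) =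
        (m 0 0 * x + m 1 0 * y) ^ (j - l : ℕ) * (m 0 1 * x + m 1 1 * y) ^ (l : ℕ) := by
    have hdeg (a b : ℂ) (n : ℕ) : ((C a + C b * X) ^ n).natDegree ≤ n := by compute_degree
    have hmul := Polynomial.homogenize_mul _ _ (hdeg (m 0 0) (m 1 0) (j - l))
      (hdeg (m 0 1) (m 1 1) l)
    rw [Nat.sub_add_cancel (Nat.le_of_lt_succ l.isLt)] at hmul
    simp only [symCoeff]
    rw [sum_coeff_mul_eq_eval_homogenize, hmul, map_mul, eval_homogenize_linear_pow,
      eval_homogenize_linear_pow]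
  simp only [evalForm_apply, symAct, Finset.sum_mul]
  rw [Finset.sum_comm]
  simp only [← hcoeff, Finset.mul_sum]
  exact Finset.sum_congr rfl fun _ _ => Finset.sum_congr rfl fun _ _ => by ring

lemma evalForm_neg (hj : Even j) (x y : ℂ) (v : Fin (j + 1) → ℂ) :
    evalForm (-x) (-y) v = evalForm x y v := by
  simp only [evalForm_apply]
  refine Finset.sum_congr rfl fun i _ => ?_
  rw [neg_pow x, neg_pow y, mul_mul_mul_comm, ← pow_add,
    Nat.sub_add_cancel (Nat.le_of_lt_succ i.isLt), hj.neg_one_pow, one_mul]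

/-- The dehomogenization `∑ i, vᵢ X^i` of the binary form with coefficient vector `v`. -/
def dehomogenize (v : Fin (j + 1) → ℂ) : Polynomial ℂ :=
  ∑ i : Fin (j + 1), Polynomial.monomial i (v i)

lemma dehomogenize_coeff (v : Fin (j + 1) → ℂ) (i : Fin (j + 1)) :
    (dehomogenize v).coeff i = v i := by
  simp [dehomogenize, Polynomial.coeff_monomial, Fin.val_inj]

lemma natDegree_dehomogenize_le (v : Fin (j + 1) → ℂ) : (dehomogenize v).natDegree ≤ j :=
  Polynomial.natDegree_sum_le_of_forall_le _ _ fun i _ =>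
    (Polynomial.natDegree_monomial_le _).trans (Nat.le_of_lt_succ i.isLt)

lemma eval_dehomogenize (v : Fin (j + 1) → ℂ) (t : ℂ) :
    (dehomogenize v).eval t = evalForm 1 t v := by
  simp [dehomogenize, evalForm_apply, Polynomial.eval_finsetSum]

lemma dehomogenize_injective : Function.Injective (dehomogenize (j := j)) := fun v w h =>
  funext fun i => by rw [← dehomogenize_coeff v, h, dehomogenize_coeff]

lemma evalForm_ext {v w : Fin (j + 1) → ℂ} (h : ∀ t, evalForm 1 t v = evalForm 1 t w) : v = w :=
  dehomogenize_injective <| Polynomial.funext fun t => by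
    rw [eval_dehomogenize, eval_dehomogenize, h]

lemma eq_evalForm_swap {v : Fin (j + 1) → ℂ} {σ : ℂ}
    (hswap : ∀ x y, evalForm x y v = σ * evalForm y x v) (i : Fin (j + 1)) :
    v i = σ * v i.rev := by
  have hrev : v = σ • v ∘ Fin.rev := evalForm_ext fun t => by
    rw [hswap, map_smul, smul_eq_mul, evalForm_apply, evalForm_apply,
      ← Equiv.sum_comp Fin.revPerm]
    refine congrArg _ (Finset.sum_congr rfl fun i _ => ?_)
    have hi := Nat.le_of_lt_succ i.isLt
    simp only [Fin.revPerm_apply, Function.comp_apply, Fin.val_rev]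
    rw [Nat.add_sub_add_right, Nat.sub_sub_self hi, mul_comm (t ^ _)]
  exact congrFun hrev i

/-! #### Forms with dihedral symmetry -/

section Reflection

variable {p : Polynomial ℂ} {σ : ℂ}

lemma coeff_comp_one_sub_X (p : Polynomial ℂ) (n : ℕ) :
    (p.comp (1 - X)).coeff n = (-1) ^ n * (Polynomial.hasseDeriv n p).eval 1 := by
  have hcomp : p.comp (1 - X) = (Polynomial.taylor 1 p).comp (C (-1) * X) := by
    rw [Polynomial.taylor_apply, Polynomial.comp_assoc]
    simp [sub_eq_neg_add]
  rw [hcomp, Polynomial.comp_C_mul_X_coeff, Polynomial.taylor_coeff, mul_comm]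

lemma neg_one_pow_natDegree_eq (hrefl : p.comp (1 - X) = C σ * p) (hp : p ≠ 0) :
    (-1) ^ p.natDegree = σ := by
  have hlead := congrArg (Polynomial.coeff · p.natDegree) hrefl
  simp only [coeff_comp_one_sub_X, Polynomial.coeff_C_mul, ← Polynomial.taylor_coeff,
    Polynomial.coeff_taylor_natDegree] at hlead
  exact mul_right_cancel₀ (Polynomial.leadingCoeff_ne_zero.2 hp) hlead

lemma coeff_succ_eq_zero_of_comp_one_sub_X {n : ℕ} (hrefl : p.comp (1 - X) = C σ * p)
    (hdeg : p.natDegree ≤ n + 1) (hn : p.coeff n = 0) : p.coeff (n + 1) = 0 := by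
  have hsum : (Polynomial.hasseDeriv n p).eval 1 = p.coeff n + (n + 1) * p.coeff (n + 1) := by
    have hdeg' : (Polynomial.hasseDeriv n p).natDegree < 2 :=
      (Polynomial.natDegree_hasseDeriv_le p n).trans_lt (by omega)
    rw [Polynomial.eval_eq_sum_range' hdeg', Finset.sum_range_succ, Finset.sum_range_one]
    simp [Polynomial.hasseDeriv_coeff, add_comm 1 n]
  have hcoeff := congrArg (Polynomial.coeff · n) hrefl
  simp only [coeff_comp_one_sub_X, Polynomial.coeff_C_mul, hsum, hn, mul_zero, zero_add] at hcoeff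
  simpa [Nat.cast_add_one_ne_zero] using hcoeff

lemma X_sub_one_pow_dvd (hrefl : p.comp (1 - X) = C σ * p) (hσ : σ ≠ 0) {n : ℕ} (hX : X ^ n ∣ p) :
    (X - C 1) ^ n ∣ p := by
  obtain ⟨q, rfl⟩ := hX
  have hdvd : (1 - X : Polynomial ℂ) ^ n ∣ C σ * (X ^ n * q) := by
    rw [← hrefl, Polynomial.mul_comp, Polynomial.X_pow_comp]
    exact dvd_mul_right _ _
  rw [← neg_sub, ← C.map_one, neg_pow] at hdvd
  exact ((Polynomial.isUnit_C.2 hσ.isUnit).dvd_mul_left).1 (dvd_of_mul_left_dvd hdvd)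

lemma X_pow_dvd_of_coeff_symm {d n : ℕ} (hdeg : p.natDegree + n ≤ d)
    (hsymm : ∀ i ≤ d, p.coeff i = σ * p.coeff (d - i)) : X ^ n ∣ p :=
  Polynomial.X_pow_dvd_iff.2 fun i hi => by
    rw [hsymm i (by omega), Polynomial.coeff_eq_zero_of_natDegree_lt (by omega), mul_zero]

lemma natDegree_ne_of_coeff_symm {d i : ℕ} (hp : p ≠ 0)
    (hsymm : ∀ i ≤ d, p.coeff i = σ * p.coeff (d - i)) (hi : i ≤ d) (hzero : p.coeff i = 0) :
    p.natDegree ≠ d - i := fun hd =>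
  hp <| Polynomial.leadingCoeff_eq_zero.1 <| by
    rw [Polynomial.leadingCoeff, hd, hsymm _ (Nat.sub_le d i), Nat.sub_sub_self hi, hzero,
      mul_zero]

lemma isCoprime_X_sub_C_pow {a b : ℂ} (hab : a ≠ b) (m n : ℕ) :
    IsCoprime ((X - C a) ^ m) ((X - C b) ^ n) :=
  (Polynomial.isCoprime_X_sub_C_of_isUnit_sub (sub_ne_zero.2 hab).isUnit).pow

lemma eq_zero_of_symmetric (hj : Even j) (hj10 : j ≤ 10) (hdeg : p.natDegree ≤ j)
    (hrefl : p.comp (1 - X) = p) (hsymm : ∀ i ≤ j, p.coeff i = p.coeff (j - i))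
    (h0 : p.coeff 0 = 0) (h2 : p.coeff 2 = 0) : p = 0 := by
  by_contra hp
  replace hrefl : p.comp (1 - X) = C 1 * p := by simpa using hrefl
  replace hsymm (i) (hi : i ≤ j) : p.coeff i = 1 * p.coeff (j - i) := by simpa using hsymm i hi
  have heven : Even p.natDegree :=
    (neg_one_pow_eq_one_iff_even (by norm_num)).1 (neg_one_pow_natDegree_eq hrefl hp)
  have hlt : p.natDegree + 4 ≤ j := by
    have hne0 := natDegree_ne_of_coeff_symm hp hsymm (Nat.zero_le j) h0
    have hne2 (h : 2 ≤ j) := natDegree_ne_of_coeff_symm hp hsymm h h2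
    grind
  have hX : (X - C 0) ^ 4 ∣ p := by
    rw [C.map_zero, sub_zero]; exact X_pow_dvd_of_coeff_symm hlt hsymm
  have hX1 : (X - C 1) ^ 4 ∣ p := X_sub_one_pow_dvd hrefl one_ne_zero (by simpa using hX)
  have hdvd := (isCoprime_X_sub_C_pow zero_ne_one 4 4).mul_dvd hX hX1
  have hdeg8 : ((X - C (0 : ℂ)) ^ 4 * (X - C 1) ^ 4).natDegree = 8 := by compute_degree!
  exact hp (Polynomial.eq_zero_of_dvd_of_natDegree_lt hdvd (by omega))

lemma eq_zero_of_antisymmetric (hj : Even j) (hj10 : j ≤ 10) (hdeg : p.natDegree ≤ j)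
    (hrefl : p.comp (1 - X) = -p) (hsymm : ∀ i ≤ j, p.coeff i = -p.coeff (j - i))
    (hneg : p.eval (-1) = 0) (h2 : p.coeff 2 = 0) : p = 0 := by
  by_contra hp
  replace hrefl : p.comp (1 - X) = C (-1) * p := by simpa using hrefl
  replace hsymm (i) (hi : i ≤ j) : p.coeff i = -1 * p.coeff (j - i) := by simpa using hsymm i hi
  have hodd : Odd p.natDegree := by
    rw [← Nat.not_even_iff_odd, ← neg_one_pow_eq_one_iff_even (R := ℂ) (by norm_num),
      neg_one_pow_natDegree_eq hrefl hp]
    norm_num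
  have hlt : p.natDegree + 3 ≤ j := by
    obtain rfl | hj2 : j = 0 ∨ 2 ≤ j := by grind
    · exact absurd hdeg (by grind)
    obtain ⟨m, rfl⟩ := Nat.exists_eq_add_of_le' hj2
    have hm : p.coeff m = 0 := by simp [hsymm m (by omega), h2]
    have hm1 := coeff_succ_eq_zero_of_comp_one_sub_X (n := m) hrefl (by grind) hm
    have hne1 := natDegree_ne_of_coeff_symm (i := 1) hp hsymm (by omega)
      (by simp [hsymm 1 (by omega), hm1])
    grind
  have hhalf : p.eval (1 / 2) = 0 := by
    have h := congrArg (Polynomial.eval (1 / 2)) hrefl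
    norm_num [Polynomial.eval_comp] at h
    linear_combination h / 2
  have hX : (X - C 0) ^ 3 ∣ p := by
    rw [C.map_zero, sub_zero]; exact X_pow_dvd_of_coeff_symm hlt hsymm
  have hX1 : (X - C 1) ^ 3 ∣ p := X_sub_one_pow_dvd hrefl (by norm_num) (by simpa using hX)
  have hlin {t : ℂ} (h : p.eval t = 0) : (X - C t) ^ 1 ∣ p := by
    rw [pow_one]; exact Polynomial.dvd_iff_isRoot.2 h
  have hcop {a b : ℂ} (hab : a ≠ b) (m n : ℕ) := isCoprime_X_sub_C_pow hab m n
  have hdvd := (hcop zero_ne_one 3 3).mul_dvd hX hX1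
  have hdvd2 := (hcop (by norm_num) 1 1).mul_dvd (hlin hhalf) (hlin hneg)
  have hdvd8 := IsCoprime.mul_dvd (.mul_left (.mul_right (hcop (by norm_num) _ _)
    (hcop (by norm_num) _ _)) (.mul_right (hcop (by norm_num) _ _) (hcop (by norm_num) _ _)))
    hdvd hdvd2
  have hdeg8 : ((X - C (0 : ℂ)) ^ 3 * (X - C 1) ^ 3 *
      ((X - C (1 / 2)) ^ 1 * (X - C (-1)) ^ 1)).natDegree = 8 := by compute_degree!
  exact hp (Polynomial.eq_zero_of_dvd_of_natDegree_lt hdvd8 (by omega))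

end Reflection

lemma evalForm_eq_zero_of_dihedral (hj : Even j) (hj10 : j ≤ 10) {v : Fin (j + 1) → ℂ} {σ : ℂ}
    (hσ : σ = 1 ∨ σ = -1) (hswap : ∀ x y, evalForm x y v = σ * evalForm y x v)
    (hrot : ∀ x y, evalForm x y v = evalForm (y - x) (-x) v)
    (hzero : ∀ i : Fin (j + 1), (i : ℕ) = 0 ∨ (i : ℕ) = 2 → v i = 0) : v = 0 := by
  have hsymm (i : ℕ) (hi : i ≤ j) :
      (dehomogenize v).coeff i = σ * (dehomogenize v).coeff (j - i) := by
    have h := eq_evalForm_swap hswap ⟨i, Nat.lt_succ_of_le hi⟩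
    rwa [← dehomogenize_coeff v, ← dehomogenize_coeff v (Fin.rev _), Fin.val_rev,
      Nat.add_sub_add_right] at h
  have hrefl : (dehomogenize v).comp (1 - X) = C σ * dehomogenize v := Polynomial.funext fun t => by
    simp only [Polynomial.eval_comp, Polynomial.eval_mul, Polynomial.eval_C, Polynomial.eval_sub,
      Polynomial.eval_one, Polynomial.eval_X, eval_dehomogenize]
    rw [← hswap t 1, hrot, sub_sub_cancel_left, evalForm_neg hj]
  have hzero' (i : ℕ) (hi : i = 0 ∨ i = 2) : (dehomogenize v).coeff i = 0 := by
    rcases le_or_gt i j with hij | hij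
    · exact (dehomogenize_coeff v ⟨i, Nat.lt_succ_of_le hij⟩).trans (hzero _ hi)
    · exact Polynomial.coeff_eq_zero_of_natDegree_lt ((natDegree_dehomogenize_le v).trans_lt hij)
  refine dehomogenize_injective (Eq.trans ?_ (by simp [dehomogenize] : 0 = dehomogenize 0))
  rcases hσ with rfl | rfl
  · exact eq_zero_of_symmetric hj hj10 (natDegree_dehomogenize_le v) (by simpa using hrefl)
      (by simpa using hsymm) (hzero' 0 (.inl rfl)) (hzero' 2 (.inr rfl))
  · refine eq_zero_of_antisymmetric hj hj10 (natDegree_dehomogenize_le v) (by simpa using hrefl)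
      (by simpa using hsymm) ?_ (hzero' 2 (.inr rfl))
    have h := hswap 1 (-1)
    rw [← evalForm_neg hj (-1), neg_neg] at h
    rw [eval_dehomogenize]
    linear_combination h / 2

end BinaryForms

/-! ### Fourier expansions on tube domains -/

section TubeFourier

open MeasureTheory

variable {d : Type*}

/-- The tube domain `ℝᵈ + iC`. -/
def tube (C : Set (d → ℝ)) : Set (d → ℂ) := {z | (fun i => (z i).im) ∈ C}

/-- The point `x + iy` of `ℂᵈ`. -/
def tubePoint (x y : d → ℝ) : d → ℂ := fun i => x i + y i * I

/-- Invariance of a function on `ℂᵈ` under translation by the lattice `ℤᵈ`. -/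
def IsPeriodic (f : (d → ℂ) → ℂ) : Prop := ∀ z (m : d → ℤ), f (fun i => z i + m i) = f z

/-- The projection `ℝᵈ → ℝᵈ / ℤᵈ`. -/
def torusMk (x : d → ℝ) : UnitAddTorus d := fun i => x i

lemma torusMk_add (x y : d → ℝ) : torusMk (x + y) = torusMk x + torusMk y := by
  funext i
  simp only [torusMk, Pi.add_apply, AddCircle.coe_add]

lemma isOpenQuotientMap_torusMk : IsOpenQuotientMap (torusMk (d := d)) :=
  IsOpenQuotientMap.piMap (f := fun (_ : d) (x : ℝ) => (x : UnitAddCircle))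
    fun _ => QuotientAddGroup.isOpenQuotientMap_mk

lemma exists_eq_add_of_torusMk_eq {x y : d → ℝ} (h : torusMk x = torusMk y) :
    ∃ m : d → ℤ, ∀ i, x i = y i + m i := by
  have coord (i : d) : ∃ m : ℤ, x i = y i + m := by
    obtain ⟨m, hm⟩ := AddSubgroup.mem_zmultiples_iff.1
      (QuotientAddGroup.eq_iff_sub_mem.1 (congrFun h i))
    exact ⟨m, by rw [zsmul_one] at hm; linarith⟩
  choose m hm using coord
  exact ⟨m, hm⟩

/-- The restriction of a periodic function to the points with imaginary part `y`, as a function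
on the torus. -/
def torusSlice (f : (d → ℂ) → ℂ) (y : d → ℝ) (t : UnitAddTorus d) : ℂ :=
  f (tubePoint (Function.surjInv isOpenQuotientMap_torusMk.surjective t) y)

variable {C : Set (d → ℝ)} {f : (d → ℂ) → ℂ} {y : d → ℝ}

lemma tubePoint_im (x y : d → ℝ) : (fun i => (tubePoint x y i).im) = y := by
  funext i
  simp [tubePoint]

lemma tubePoint_mem_tube (x : d → ℝ) (hy : y ∈ C) : tubePoint x y ∈ tube C := by
  change (fun i => (tubePoint x y i).im) ∈ C
  rwa [tubePoint_im]

lemma tubePoint_re_im (z : d → ℂ) : tubePoint (fun i => (z i).re) (fun i => (z i).im) = z :=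
  funext fun i => re_add_im (z i)

lemma torusSlice_torusMk (hf : IsPeriodic f) (x y : d → ℝ) :
    torusSlice f y (torusMk x) = f (tubePoint x y) := by
  obtain ⟨m, hm⟩ := exists_eq_add_of_torusMk_eq
    (Function.surjInv_eq isOpenQuotientMap_torusMk.surjective (torusMk x))
  rw [torusSlice, ← hf (tubePoint x y) m]
  congr 1
  funext i
  simp only [tubePoint, hm i, ofReal_add, ofReal_intCast]
  ring

lemma continuous_torusSlice (hf : IsPeriodic f) (hc : ContinuousOn f (tube C)) (hy : y ∈ C) :
    Continuous (torusSlice f y) := by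
  rw [isOpenQuotientMap_torusMk.isQuotientMap.continuous_iff,
    show torusSlice f y ∘ torusMk = fun x => f (tubePoint x y) from
      funext fun x => torusSlice_torusMk hf x y]
  exact hc.comp_continuous (by unfold tubePoint; fun_prop) fun x => tubePoint_mem_tube x hy

lemma intervalIntegral_eq_of_im_segment [Finite d] [DecidableEq d] (hf : IsPeriodic f)
    (hd : DifferentiableOn ℂ f (tube C)) (i : d) {v w : ℝ}
    (hC : ∀ s ∈ Set.uIcc v w, Function.update y i s ∈ C) (x : d → ℝ) :
    ∫ s in (0 : ℝ)..1, f (tubePoint (Pi.single i s + x) (Function.update y i v)) =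
      ∫ s in (0 : ℝ)..1, f (tubePoint (Pi.single i s + x) (Function.update y i w)) := by
  cases nonempty_fintype d
  let line (ζ : ℂ) : d → ℂ := Function.update (tubePoint x y) i (x i + ζ)
  have line_mem : Set.MapsTo line (Set.uIcc 0 1 ×ℂ Set.uIcc v w) (tube C) := by
    intro ζ hζ
    have im_line : (fun l => (line ζ l).im) = Function.update y i ζ.im := by
      funext l
      rcases eq_or_ne l i with rfl | hl <;> simp [line, tubePoint, *]
    change (fun l => (line ζ l).im) ∈ C
    exact im_line ▸ hC ζ.im hζ.2
  have line_add_mul_I (s u : ℝ) :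
      line (s + u * I) = tubePoint (Pi.single i s + x) (Function.update y i u) := by
    funext l
    rcases eq_or_ne l i with rfl | hl
    · simp [line, tubePoint]; ring
    · simp [line, tubePoint, hl]
  have line_add_one (ζ : ℂ) : f (line (1 + ζ)) = f (line ζ) := by
    rw [← hf (line ζ) (Pi.single i 1)]
    congr 1
    funext l
    rcases eq_or_ne l i with rfl | hl
    · simp [line]; ring
    · simp [line, hl]
  have hdiff : DifferentiableOn ℂ (fun ζ => f (line ζ)) (Set.uIcc 0 1 ×ℂ Set.uIcc v w) := by
    refine hd.comp (Differentiable.differentiableOn (differentiable_pi.2 fun l => ?_)) line_mem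
    rcases eq_or_ne l i with rfl | hl
    · simp only [line, Function.update_self]
      fun_prop
    · simp only [line, Function.update_of_ne hl, differentiable_const]
  have rectangle := integral_boundary_rect_eq_zero_of_differentiableOn _ (v * I) (1 + w * I)
    (by simpa using hdiff)
  refine sub_eq_zero.1 ?_
  simpa [line_add_mul_I, line_add_one] using rectangle

variable [Fintype d]

/-- The additive character `z ↦ exp (2πi n·z)` of `ℂᵈ`. -/
def tubeChar (n : d → ℤ) (z : d → ℂ) : ℂ := cexp (2 * Real.pi * I * ∑ i, n i * z i)

lemma differentiable_tubeChar (n : d → ℤ) : Differentiable ℂ (tubeChar n) := by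
  unfold tubeChar
  fun_prop

lemma isPeriodic_tubeChar (n : d → ℤ) : IsPeriodic (tubeChar n) := by
  intro z m
  have shift : 2 * Real.pi * I * ∑ i, (n i : ℂ) * (z i + m i) =
      2 * Real.pi * I * ∑ i, n i * z i + (∑ i, n i * m i : ℤ) * (2 * Real.pi * I) := by
    simp only [mul_add, Finset.sum_add_distrib]
    push_cast
    ring
  rw [tubeChar, tubeChar, shift, Complex.exp_add, exp_int_mul_two_pi_mul_I, mul_one]

lemma tubeChar_neg_mul_tubeChar (n : d → ℤ) (z : d → ℂ) : tubeChar (-n) z * tubeChar n z = 1 := by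
  simp [tubeChar, ← Complex.exp_add]

lemma norm_tubeChar_tubePoint (n : d → ℤ) (x y : d → ℝ) :
    ‖tubeChar n (tubePoint x y)‖ = Real.exp (-(2 * Real.pi * ∑ i, n i * y i)) := by
  simp [tubeChar, tubePoint, norm_exp]

lemma tubeChar_tubePoint (n : d → ℤ) (x y : d → ℝ) :
    tubeChar n (tubePoint x y) =
      UnitAddTorus.mFourier n (torusMk x) * tubeChar n (tubePoint 0 y) := by
  simp only [tubeChar, tubePoint, UnitAddTorus.mFourier, ContinuousMap.coe_mk, torusMk,
    fourier_coe_apply, ← Complex.exp_sum, ← Complex.exp_add, Finset.mul_sum,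
    ← Finset.sum_add_distrib]
  congr 1
  refine Finset.sum_congr rfl fun i _ => ?_
  simp only [Pi.zero_apply, ofReal_zero, ofReal_one]
  ring

/-- The Haar probability measure of the torus. Mathlib's `UnitAddTorus` file uses this measure
through instances that are local to it. -/
abbrev torusMeasure (d : Type*) [Fintype d] : Measure (UnitAddTorus d) :=
  Measure.pi fun _ => AddCircle.haarAddCircle

lemma mFourierCoeff_eq_integral_torusMeasure (g : UnitAddTorus d → ℂ) (n : d → ℤ) :
    UnitAddTorus.mFourierCoeff g n = ∫ t, UnitAddTorus.mFourier (-n) t • g t ∂torusMeasure d := rfl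

lemma norm_mFourierCoeff_le {g : UnitAddTorus d → ℂ} {B : ℝ} (hg : ∀ t, ‖g t‖ ≤ B) (n : d → ℤ) :
    ‖UnitAddTorus.mFourierCoeff g n‖ ≤ B := by
  have integrand_le (t) : ‖UnitAddTorus.mFourier (-n) t • g t‖ ≤ B := by
    have h := (UnitAddTorus.mFourier (-n)).norm_coe_le_norm t
    rw [UnitAddTorus.mFourier_norm] at h
    rw [norm_smul]
    exact (mul_le_of_le_one_left (norm_nonneg _) h).trans (hg t)
  rw [mFourierCoeff_eq_integral_torusMeasure]
  simpa using norm_integral_le_of_norm_le_const (μ := torusMeasure d)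
    (Eventually.of_forall integrand_le)

lemma eq_zero_of_hasSum_smul_mFourier {b : (d → ℤ) → ℂ}
    (h : HasSum (fun n => b n • UnitAddTorus.mFourier n) (0 : C(UnitAddTorus d, ℂ))) : b = 0 := by
  classical
  let toL2 := ContinuousMap.toLp (E := ℂ) 2 (torusMeasure d) ℂ
  have orthonormal (i j) : inner ℂ (toL2 (UnitAddTorus.mFourier i))
      (toL2 (UnitAddTorus.mFourier j)) = if i = j then (1 : ℂ) else 0 :=
    orthonormal_iff_ite.1 UnitAddTorus.orthonormal_mFourier i j
  funext m
  have hsum := (h.mapL toL2).mapL (innerSL ℂ (toL2 (UnitAddTorus.mFourier m)))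
  simp only [map_smul, innerSL_apply_apply, orthonormal, smul_eq_mul, mul_ite, mul_one,
    mul_zero, map_zero] at hsum
  simpa using (hasSum_single m fun n hn => if_neg hn.symm).unique hsum

theorem eq_zero_of_hasSum_mul_tubeChar {b : (d → ℤ) → ℂ}
    (h : ∀ x : d → ℝ, HasSum (fun n => b n * tubeChar n (tubePoint x y)) 0) : b = 0 := by
  let c (n : d → ℤ) : ℂ := b n * tubeChar n (tubePoint 0 y)
  have hc : Summable fun n => c n • UnitAddTorus.mFourier (d := d) n := by
    refine .of_norm ((h 0).summable.norm.congr fun n => ?_)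
    rw [norm_smul, UnitAddTorus.mFourier_norm, mul_one]
  have tsum_eq_zero : ∑' n, c n • UnitAddTorus.mFourier (d := d) n = 0 := by
    ext t
    obtain ⟨x, rfl⟩ := isOpenQuotientMap_torusMk.surjective t
    refine (ContinuousMap.hasSum_apply hc.hasSum (torusMk x)).unique ?_
    convert! h x using 2 with n
    rw [tubeChar_tubePoint, ContinuousMap.smul_apply, smul_eq_mul, mul_left_comm, mul_comm]
  have c_eq_zero : c = 0 := eq_zero_of_hasSum_smul_mFourier (tsum_eq_zero ▸ hc.hasSum)
  funext n
  exact (mul_eq_zero.1 (congrFun c_eq_zero n)).resolve_right (exp_ne_zero _)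

lemma integral_torusMeasure_eq_integral_average [DecidableEq d] {g : UnitAddTorus d → ℂ}
    (hg : Continuous g) (i : d) :
    ∫ t, g t ∂torusMeasure d =
      ∫ t, (∫ s in (0 : ℝ)..1, g (torusMk (Pi.single i s) + t)) ∂torusMeasure d := by
  obtain ⟨B, hB⟩ := isCompact_univ.exists_bound_of_continuousOn hg.continuousOn
  have : IsFiniteMeasure (volume.restrict (Set.uIoc (0 : ℝ) 1)) := ⟨by simp⟩
  have hcont : Continuous (Function.uncurry fun (s : ℝ) t => g (torusMk (Pi.single i s) + t)) := by
    have hsingle : Continuous fun s : ℝ => torusMk (Pi.single i s) :=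
      isOpenQuotientMap_torusMk.continuous.comp (continuous_single (A := fun _ : d => ℝ) i)
    exact hg.comp ((hsingle.comp continuous_fst).add continuous_snd)
  rw [← intervalIntegral_integral_swap (.of_bound hcont.aestronglyMeasurable B
    (Eventually.of_forall fun p => hB _ trivial))]
  simp [integral_add_left_eq_self]

lemma integral_torusSlice_update_eq [DecidableEq d] (hf : IsPeriodic f)
    (hd : DifferentiableOn ℂ f (tube C)) (i : d) {v w : ℝ}
    (hC : ∀ s ∈ Set.uIcc v w, Function.update y i s ∈ C) :
    ∫ t, torusSlice f (Function.update y i v) t ∂torusMeasure d =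
      ∫ t, torusSlice f (Function.update y i w) t ∂torusMeasure d := by
  have hcont {s : ℝ} (hs : s ∈ Set.uIcc v w) :=
    continuous_torusSlice hf hd.continuousOn (hC s hs)
  rw [integral_torusMeasure_eq_integral_average (hcont Set.left_mem_uIcc) i,
    integral_torusMeasure_eq_integral_average (hcont Set.right_mem_uIcc) i]
  congr 1
  funext t
  obtain ⟨x, rfl⟩ := isOpenQuotientMap_torusMk.surjective t
  simp only [← torusMk_add, torusSlice_torusMk hf]
  exact intervalIntegral_eq_of_im_segment hf hd i hC x

lemma integral_torusSlice_eq_of_mem_ball (hf : IsPeriodic f) (hd : DifferentiableOn ℂ f (tube C))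
    {y' : d → ℝ} {r : ℝ} (hC : Metric.ball y r ⊆ C) (hy' : y' ∈ Metric.ball y r) :
    ∫ t, torusSlice f y t ∂torusMeasure d = ∫ t, torusSlice f y' t ∂torusMeasure d := by
  classical
  have hr : 0 < r := Metric.nonempty_ball.1 ⟨y', hy'⟩
  rw [Metric.mem_ball', dist_pi_lt_iff hr] at hy'
  suffices ∀ s : Finset d, ∫ t, torusSlice f y t ∂torusMeasure d =
      ∫ t, torusSlice f (s.piecewise y' y) t ∂torusMeasure d by
    simpa using this Finset.univ
  intro s
  induction s using Finset.induction_on with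
  | empty => rw [Finset.piecewise_empty]
  | insert i s hi ih =>
    rw [ih, Finset.piecewise_insert]
    conv_lhs => rw [← Function.update_eq_self i (s.piecewise y' y),
      Finset.piecewise_eq_of_notMem _ _ _ hi]
    refine integral_torusSlice_update_eq hf hd i fun u hu => hC ?_
    rw [Metric.mem_ball', dist_pi_lt_iff hr]
    intro l
    rcases eq_or_ne l i with rfl | hl
    · rw [Function.update_self]
      exact (Real.dist_left_le_of_mem_uIcc hu).trans_lt (hy' l)
    · rw [Function.update_of_ne hl]
      by_cases hls : l ∈ s <;> simp [hls, hy', hr]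

theorem integral_torusSlice_eq_of_isPreconnected (hf : IsPeriodic f)
    (hd : DifferentiableOn ℂ f (tube C)) (hC : IsOpen C) (hC' : IsPreconnected C) {y' : d → ℝ}
    (hy : y ∈ C) (hy' : y' ∈ C) :
    ∫ t, torusSlice f y t ∂torusMeasure d = ∫ t, torusSlice f y' t ∂torusMeasure d := by
  refine hC'.induction₂ (fun y y' => ∫ t, torusSlice f y t ∂torusMeasure d =
    ∫ t, torusSlice f y' t ∂torusMeasure d) (fun y hy => ?_) (fun _ _ _ _ _ _ => Eq.trans)
    (fun _ _ _ _ => Eq.symm) hy hy'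
  obtain ⟨r, hr, hball⟩ := Metric.isOpen_iff.1 hC y hy
  filter_upwards [mem_nhdsWithin_of_mem_nhds (Metric.ball_mem_nhds y hr)] with y' hy'
  exact integral_torusSlice_eq_of_mem_ball hf hd hball hy'

lemma exists_mFourierCoeff_torusSlice (hf : IsPeriodic f) (hd : DifferentiableOn ℂ f (tube C))
    (hC : IsOpen C) (hC' : IsPreconnected C) :
    ∃ a : (d → ℤ) → ℂ, ∀ y ∈ C, ∀ n,
      UnitAddTorus.mFourierCoeff (torusSlice f y) n = a n * tubeChar n (tubePoint 0 y) := by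
  rcases C.eq_empty_or_nonempty with rfl | ⟨y₀, hy₀⟩
  · exact ⟨0, fun _ h => h.elim⟩
  let twist (n : d → ℤ) (z : d → ℂ) : ℂ := tubeChar (-n) z * f z
  have hper (n) : IsPeriodic (twist n) := fun z m => by
    simp only [twist, hf z m, isPeriodic_tubeChar (-n) z m]
  have hdiff (n) : DifferentiableOn ℂ (twist n) (tube C) :=
    (differentiable_tubeChar _).differentiableOn.mul hd
  refine ⟨fun n => ∫ t, torusSlice (twist n) y₀ t ∂torusMeasure d, fun y hy n => ?_⟩
  have integrand (t) : UnitAddTorus.mFourier (-n) t • torusSlice f y t =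
      torusSlice (twist n) y t * tubeChar n (tubePoint 0 y) := by
    obtain ⟨x, rfl⟩ := isOpenQuotientMap_torusMk.surjective t
    rw [torusSlice_torusMk hf, torusSlice_torusMk (hper n), smul_eq_mul]
    simp only [twist]
    rw [tubeChar_tubePoint]
    linear_combination -(UnitAddTorus.mFourier (-n) (torusMk x) * f (tubePoint x y)) *
      tubeChar_neg_mul_tubeChar n (tubePoint 0 y)
  beta_reduce
  rw [integral_torusSlice_eq_of_isPreconnected (hper n) (hdiff n) hC hC' hy₀ hy,
    mFourierCoeff_eq_integral_torusMeasure, funext integrand, integral_mul_const]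

lemma summable_prod_apply {κ : Type*} {u : κ → ℝ} (hu : Summable u) (hu0 : ∀ k, 0 ≤ u k) :
    Summable fun n : d → κ => ∏ i, u (n i) := by
  classical
  refine summable_of_sum_le (c := ∏ _i : d, ∑' k, u k)
    (fun n => Finset.prod_nonneg fun i _ => hu0 (n i)) fun S => ?_
  calc ∑ n ∈ S, ∏ i, u (n i)
      ≤ ∑ n ∈ Fintype.piFinset fun i => S.image (· i), ∏ i, u (n i) :=
        Finset.sum_le_sum_of_subset_of_nonneg
          (fun n hn => Fintype.mem_piFinset.2 fun i => Finset.mem_image_of_mem (· i) hn)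
          fun n _ _ => Finset.prod_nonneg fun i _ => hu0 (n i)
    _ = ∏ i, ∑ k ∈ S.image (· i), u k := (Finset.prod_univ_sum _ fun _ => u).symm
    _ ≤ ∏ _i : d, ∑' k, u k := Finset.prod_le_prod (fun i _ => Finset.sum_nonneg fun k _ => hu0 k)
        fun i _ => hu.sum_le_tsum _ fun k _ => hu0 k

lemma summable_exp_neg_mul_abs_int {c : ℝ} (hc : 0 < c) :
    Summable fun m : ℤ => Real.exp (-(c * |(m : ℝ)|)) := by
  have h : Summable fun k : ℕ => Real.exp (-(c * k)) := by
    simpa [mul_comm c] using Real.summable_exp_nat_mul_iff.2 (neg_lt_zero.2 hc)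
  exact .of_nat_of_neg (by simpa using h) (by simpa using h)

lemma summable_of_norm_mul_tubeChar_le (hC : IsOpen C) {a : (d → ℤ) → ℂ}
    (ha : ∀ y ∈ C, ∃ B, ∀ n, ‖a n * tubeChar n (tubePoint 0 y)‖ ≤ B) (hy : y ∈ C) :
    Summable fun n => a n * tubeChar n (tubePoint 0 y) := by
  obtain ⟨r, hr, hball⟩ := Metric.nhds_basis_closedBall.mem_iff.1 (hC.mem_nhds hy)
  let vertex (ε : d → SignType) (i : d) : ℝ := y i - r * ε i
  have vertex_mem (ε) : vertex ε ∈ C := by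
    refine hball ((dist_pi_le_iff hr.le).2 fun i => ?_)
    rcases h : ε i <;> simp [vertex, h, abs_of_pos hr, hr.le]
  choose B hB using fun ε => ha _ (vertex_mem ε)
  obtain ⟨M, hM⟩ := (Set.finite_range B).bddAbove
  have hc : 0 < 2 * Real.pi * r := by positivity
  have summable_bound :=
    summable_prod_apply (d := d) (summable_exp_neg_mul_abs_int hc) fun _ => (Real.exp_pos _).le
  refine .of_norm_bounded (summable_bound.mul_left M) fun n => ?_
  let ε (i : d) : SignType := SignType.sign (n i : ℝ)
  have dot_vertex : ∑ i, n i * y i = ∑ i, n i * vertex ε i + ∑ i, r * |(n i : ℝ)| := by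
    rw [← Finset.sum_add_distrib]
    refine Finset.sum_congr rfl fun i _ => ?_
    linear_combination r * (self_mul_sign _ : (n i : ℝ) * ε i = |(n i : ℝ)|)
  calc ‖a n * tubeChar n (tubePoint 0 y)‖
      = ‖a n * tubeChar n (tubePoint 0 (vertex ε))‖ *
          ∏ i, Real.exp (-(2 * Real.pi * r * |(n i : ℝ)|)) := by
        simp only [norm_mul, norm_tubeChar_tubePoint, ← Real.exp_sum, mul_assoc, ← Real.exp_add,
          dot_vertex, mul_add, neg_add, Finset.mul_sum, Finset.sum_neg_distrib]
    _ ≤ M * ∏ i, Real.exp (-(2 * Real.pi * r * |(n i : ℝ)|)) := by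
        gcongr
        exact (hB ε n).trans (hM ⟨ε, rfl⟩)

theorem exists_hasSum_mul_tubeChar (hf : IsPeriodic f) (hd : DifferentiableOn ℂ f (tube C))
    (hC : IsOpen C) (hC' : IsPreconnected C) :
    ∃ a : (d → ℤ) → ℂ, ∀ z ∈ tube C, HasSum (fun n => a n * tubeChar n z) (f z) := by
  obtain ⟨a, ha⟩ := exists_mFourierCoeff_torusSlice hf hd hC hC'
  have hcont {y} (hy : y ∈ C) := continuous_torusSlice hf hd.continuousOn hy
  have bounded (y) (hy : y ∈ C) : ∃ B, ∀ n, ‖a n * tubeChar n (tubePoint 0 y)‖ ≤ B := by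
    obtain ⟨B, hB⟩ := isCompact_univ.exists_bound_of_continuousOn (hcont hy).continuousOn
    exact ⟨B, fun n => ha y hy n ▸ norm_mFourierCoeff_le (fun t => hB t trivial) n⟩
  refine ⟨a, fun z hz => ?_⟩
  have hsum : Summable (UnitAddTorus.mFourierCoeff (torusSlice f fun i => (z i).im)) :=
    (summable_of_norm_mul_tubeChar_le hC bounded hz).congr fun n => (ha _ hz n).symm
  have h := UnitAddTorus.hasSum_mFourier_series_apply_of_summable (f := ⟨_, hcont hz⟩) hsum
    (torusMk fun i => (z i).re)
  rw [ContinuousMap.coe_mk, torusSlice_torusMk hf, tubePoint_re_im] at h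
  convert! h using 2 with n
  rw [ha _ hz, smul_eq_mul, mul_assoc, mul_comm (tubeChar _ _), ← tubeChar_tubePoint,
    tubePoint_re_im]

end TubeFourier

/-! ### Fourier expansions on the Siegel upper half space -/

section SiegelFourier

/-- Holomorphic functions on `ℍ₂` with the transformation law of weight `(j, k)` and character `χ`.
By the Koecher principle they are modular forms in the usual sense. -/
structure IsSiegelForm (j : ℕ) (k : ℤ) (χ : Matrix (Fin 4) (Fin 4) ℤ → ℂ)
    (F : (Fin 2 → Fin 2 → ℂ) → Fin (j + 1) → ℂ) : Prop where
  differentiableOn : DifferentiableOn ℂ F H2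
  map_moeb : ∀ γ ∈ Sp4Z, ∀ τ ∈ H2, F (moeb γ τ) = χ γ • wt j k (den γ τ) (F τ)

/-- The cone of positive definite symmetric matrices `!![y 0, y 1; y 1, y 2]`. -/
def posDefCone : Set (Fin 3 → ℝ) := {y | 0 < y 0 ∧ y 1 ^ 2 < y 0 * y 2}

/-- The symmetric matrix with entries `2 z 0, 2 z 1, 2 z 2`. The factor `2` makes functions that are
only invariant under even translations of `ℍ₂` periodic in `z`. -/
def doubleSymm (z : Fin 3 → ℂ) : Fin 2 → Fin 2 → ℂ := ![![2 * z 0, 2 * z 1], ![2 * z 1, 2 * z 2]]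

/-- The exponential `exp (πi tr (Nτ))`, where the half-integral symmetric matrix
`N = !![n 0, n 1 / 2; n 1 / 2, n 2]` is encoded by `n`. -/
def qExp (n : Fin 3 → ℤ) (τ : Fin 2 → Fin 2 → ℂ) : ℂ :=
  cexp (Real.pi * I * (n 0 * τ 0 0 + n 1 * τ 0 1 + n 2 * τ 1 1))

/-- The real number `tr (N Im τ)`, for the half-integral symmetric matrix `N` encoded by `n`. -/
def imPairing (n : Fin 3 → ℤ) (τ : Fin 2 → Fin 2 → ℂ) : ℝ :=
  n 0 * (τ 0 0).im + n 1 * (τ 0 1).im + n 2 * (τ 1 1).im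

/-- `F` is the sum on `ℍ₂` of the Fourier series with coefficients `a`. -/
def HasFourierExpansion {j : ℕ} (F : (Fin 2 → Fin 2 → ℂ) → Fin (j + 1) → ℂ)
    (a : (Fin 3 → ℤ) → Fin (j + 1) → ℂ) : Prop :=
  ∀ τ ∈ H2, HasSum (fun n => qExp n τ • a n) (F τ)

lemma isOpen_posDefCone : IsOpen posDefCone :=
  (isOpen_lt continuous_const (continuous_apply 0)).inter
    (isOpen_lt ((continuous_apply 1).pow 2) ((continuous_apply 0).mul (continuous_apply 2)))

lemma convex_posDefCone : Convex ℝ posDefCone := by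
  refine convex_iff_forall_pos.2 fun y ⟨hy, hdet⟩ y' ⟨hy', hdet'⟩ s t hs ht _ => ⟨?_, ?_⟩
  · simp only [Pi.add_apply, Pi.smul_apply, smul_eq_mul]
    positivity
  have polar : 2 * (y 1 * y' 1) < y 0 * y' 2 + y' 0 * y 2 := by
    refine lt_of_mul_lt_mul_left ?_ (mul_pos hy hy').le
    nlinarith [sq_nonneg (y 1 * y' 0 - y' 1 * y 0), mul_lt_mul_of_pos_left hdet (pow_pos hy' 2),
      mul_lt_mul_of_pos_left hdet' (pow_pos hy 2)]
  simp only [Pi.add_apply, Pi.smul_apply, smul_eq_mul]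
  nlinarith [mul_lt_mul_of_pos_left hdet (pow_pos hs 2),
    mul_lt_mul_of_pos_left hdet' (pow_pos ht 2), mul_lt_mul_of_pos_left polar (mul_pos hs ht)]

lemma doubleSymm_mem_H2 {z : Fin 3 → ℂ} : doubleSymm z ∈ H2 ↔ z ∈ tube posDefCone := by
  have hdet : (z 1).im ^ 2 < (z 0).im * (z 2).im ↔ 0 < imDet (doubleSymm z) := by
    have himDet : imDet (doubleSymm z) = 4 * ((z 0).im * (z 2).im - (z 1).im ^ 2) := by
      simp [imDet, doubleSymm]
      ring
    rw [himDet, mul_pos_iff_of_pos_left four_pos, sub_pos]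
  rw [mem_H2_iff]
  simp only [tube, posDefCone, doubleSymm]
  simp [hdet, doubleSymm]

lemma doubleSymm_half {τ : Fin 2 → Fin 2 → ℂ} (hτ : τ ∈ H2) :
    doubleSymm ![τ 0 0 / 2, τ 0 1 / 2, τ 1 1 / 2] = τ := by
  funext i l
  fin_cases i <;> fin_cases l <;> simp [doubleSymm, symm_of_mem_H2 hτ, mul_div_cancel₀]

lemma differentiable_doubleSymm : Differentiable ℂ doubleSymm := by
  have hentry (l : Fin 3) : Differentiable ℂ fun z : Fin 3 → ℂ => 2 * z l := by fun_prop
  refine differentiable_pi.2 fun i => differentiable_pi.2 fun l => ?_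
  fin_cases i <;> fin_cases l
  exacts [hentry 0, hentry 1, hentry 1, hentry 2]

lemma qExp_doubleSymm (n : Fin 3 → ℤ) (z : Fin 3 → ℂ) : qExp n (doubleSymm z) = tubeChar n z := by
  simp only [qExp, tubeChar, doubleSymm, Fin.sum_univ_three]
  simp
  ring_nf

lemma norm_qExp (n : Fin 3 → ℤ) (τ : Fin 2 → Fin 2 → ℂ) :
    ‖qExp n τ‖ = Real.exp (-(Real.pi * imPairing n τ)) := by
  rw [qExp, norm_exp]
  simp [imPairing]

lemma symAct_one {j : ℕ} (v : Fin (j + 1) → ℂ) : symAct j 1 v = v :=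
  evalForm_ext fun t => by simp [evalForm_symAct]

lemma wt_one {j : ℕ} (k : ℤ) (v : Fin (j + 1) → ℂ) : wt j k 1 v = v := by
  rw [wt, det_one, _root_.one_zpow, one_smul, symAct_one]

/-- The action `Sym^j(m) ⊗ det(m)^k` as a continuous linear map. -/
def wtCLM (j : ℕ) (k : ℤ) (m : Matrix (Fin 2) (Fin 2) ℂ) :
    (Fin (j + 1) → ℂ) →L[ℂ] (Fin (j + 1) → ℂ) :=
  LinearMap.toContinuousLinearMap
    { toFun := wt j k m, map_add' := wt_add j k m, map_smul' := wt_smul j k m }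

variable {j : ℕ} {k : ℤ} {ε : Matrix (Fin 4) (Fin 4) ℤ → ℂ}
  {F : (Fin 2 → Fin 2 → ℂ) → Fin (j + 1) → ℂ} {a b : (Fin 3 → ℤ) → Fin (j + 1) → ℂ}

lemma evalForm_wt (m : Matrix (Fin 2) (Fin 2) ℂ) (v : Fin (j + 1) → ℂ) (x y : ℂ) :
    evalForm x y (wt j k m v) =
      m.det ^ k * evalForm (m 0 0 * x + m 1 0 * y) (m 0 1 * x + m 1 1 * y) v := by
  rw [wt, map_smul, smul_eq_mul, evalForm_symAct]

lemma IsSiegelForm.map_translation (hF : IsSiegelForm j k ε F) (a b c : ℤ)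
    {τ : Fin 2 → Fin 2 → ℂ} (hτ : τ ∈ H2) :
    F ![![τ 0 0 + a, τ 0 1 + b], ![τ 1 0 + b, τ 1 1 + c]] = ε (translation a b c) • F τ := by
  have h := hF.map_moeb _ (translation_mem_Sp4Z a b c) τ hτ
  rwa [den_translation, moeb_translation, wt_one] at h

lemma IsSiegelForm.comp_doubleSymm_add (hε : IsEps ε) (hF : IsSiegelForm j k ε F)
    {z : Fin 3 → ℂ} (hz : z ∈ tube posDefCone) (m : Fin 3 → ℤ) :
    F (doubleSymm fun i => z i + m i) = F (doubleSymm z) := by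
  have hsq : translation (2 * m 0) (2 * m 1) (2 * m 2) =
      translation (m 0) (m 1) (m 2) * translation (m 0) (m 1) (m 2) := by
    ext i l
    fin_cases i <;> fin_cases l <;> simp [translation, mul_apply, Fin.sum_univ_four, two_mul]
  have h := hF.map_translation (2 * m 0) (2 * m 1) (2 * m 2) (doubleSymm_mem_H2.2 hz)
  rw [hsq, hε.map_mul (translation_mem_Sp4Z _ _ _) (translation_mem_Sp4Z _ _ _),
    hε.map_mul_self (translation_mem_Sp4Z _ _ _), one_smul] at h
  rw [← h]
  congr 1
  simp only [doubleSymm]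
  simp [mul_add]

theorem IsSiegelForm.exists_hasFourierExpansion (hε : IsEps ε) (hF : IsSiegelForm j k ε F) :
    ∃ a, HasFourierExpansion F a := by
  let f (i : Fin (j + 1)) : (Fin 3 → ℂ) → ℂ :=
    (tube posDefCone).indicator fun z => F (doubleSymm z) i
  have hper (i) : IsPeriodic (f i) := fun z m => by
    have htube : (fun l => z l + (m l : ℂ)) ∈ tube posDefCone ↔ z ∈ tube posDefCone := by
      simp [tube]
    by_cases hz : z ∈ tube posDefCone
    · simp only [f, Set.indicator_of_mem hz, Set.indicator_of_mem (htube.2 hz),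
        hF.comp_doubleSymm_add hε hz m]
    · simp only [f, Set.indicator_of_notMem hz, Set.indicator_of_notMem (mt htube.1 hz)]
  have hdiff (i) : DifferentiableOn ℂ (f i) (tube posDefCone) := by
    refine DifferentiableOn.congr ?_ fun z hz => Set.indicator_of_mem hz _
    exact differentiableOn_pi.1 (hF.differentiableOn.comp
      differentiable_doubleSymm.differentiableOn fun z hz => doubleSymm_mem_H2.2 hz) i
  choose a ha using fun i => exists_hasSum_mul_tubeChar (hper i) (hdiff i) isOpen_posDefCone
    convex_posDefCone.isPreconnected
  refine ⟨fun n i => a i n, fun τ hτ => Pi.hasSum.2 fun i => ?_⟩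
  have hz : ![τ 0 0 / 2, τ 0 1 / 2, τ 1 1 / 2] ∈ tube posDefCone := by
    rwa [← doubleSymm_mem_H2, doubleSymm_half hτ]
  have h := ha i _ hz
  simp only [f, Set.indicator_of_mem hz, ← qExp_doubleSymm, doubleSymm_half hτ] at h
  simpa only [Pi.smul_apply, smul_eq_mul, mul_comm] using h

theorem HasFourierExpansion.unique (ha : HasFourierExpansion F a) (hb : HasFourierExpansion F b) :
    a = b := by
  have hmem (x : Fin 3 → ℝ) : doubleSymm (tubePoint x ![1, 0, 1]) ∈ H2 :=
    doubleSymm_mem_H2.2 (tubePoint_mem_tube x ⟨by simp, by simp⟩)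
  funext n i
  have hdiff : (fun n => a n i - b n i) = 0 :=
    eq_zero_of_hasSum_mul_tubeChar (y := ![1, 0, 1]) fun x => by
      have h := Pi.hasSum.1 ((ha _ (hmem x)).sub (hb _ (hmem x))) i
      simpa [qExp_doubleSymm, sub_mul, mul_comm] using h
  exact sub_eq_zero.1 (congrFun hdiff n)

/-- Since `ε` is a character of order two, a translation on which it is `-1` kills the coefficients
whose exponential it leaves invariant. -/
lemma HasFourierExpansion.eq_zero_of_even (ha : HasFourierExpansion F a)
    (hF : IsSiegelForm j k ε F) {p q r : ℤ} (hε : ε (translation p q r) = -1) {n : Fin 3 → ℤ}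
    (hn : Even (n 0 * p + n 1 * q + n 2 * r)) : a n = 0 := by
  have qExp_translate (n : Fin 3 → ℤ) (τ : Fin 2 → Fin 2 → ℂ) :
      qExp n ![![τ 0 0 + p, τ 0 1 + q], ![τ 1 0 + q, τ 1 1 + r]] =
        cexp (Real.pi * I * (n 0 * p + n 1 * q + n 2 * r : ℤ)) * qExp n τ := by
    rw [qExp, qExp, ← Complex.exp_add]
    congr 1
    simp
    ring
  have translated : HasFourierExpansion F
      fun n => -(cexp (Real.pi * I * (n 0 * p + n 1 * q + n 2 * r : ℤ)) • a n) := fun τ hτ => by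
    have hmem := moeb_mem_H2 (translation_mem_Sp4Z p q r) hτ
    rw [moeb_translation] at hmem
    have h := (ha _ hmem).neg
    rw [hF.map_translation p q r hτ, hε, neg_one_smul, neg_neg] at h
    simpa only [qExp_translate, mul_smul, smul_neg, smul_comm (qExp _ τ)] using h
  obtain ⟨m, hm⟩ := hn
  have hexp : cexp (Real.pi * I * (n 0 * p + n 1 * q + n 2 * r : ℤ)) = 1 :=
    Complex.exp_eq_one_iff.2 ⟨m, by rw [hm]; push_cast; ring⟩
  have h := congrFun (ha.unique translated) n
  simp only [hexp, one_smul] at h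
  exact self_eq_neg.1 h

theorem HasFourierExpansion.odd_of_ne_zero (ha : HasFourierExpansion F a) (hε : IsEps ε)
    (hF : IsSiegelForm j k ε F) {n : Fin 3 → ℤ} (hn : a n ≠ 0) (i : Fin 3) : Odd (n i) := by
  rw [← Int.not_even_iff_odd]
  intro heven
  apply hn
  fin_cases i
  · exact ha.eq_zero_of_even hF hε.translation_fst (by simpa using heven)
  · exact ha.eq_zero_of_even hF (hε.translation_offDiag.trans hε.embedFst_T) (by simpa using heven)
  · exact ha.eq_zero_of_even hF hε.translation_snd (by simpa using heven)

/-- The action `N ↦ UᵀNU` on half-integral symmetric matrices `N = !![n 0, n 1 / 2; n 1 / 2, n 2]`,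
dual to `τ ↦ UτUᵀ`. -/
def formAct (U : Matrix (Fin 2) (Fin 2) ℤ) (n : Fin 3 → ℤ) : Fin 3 → ℤ :=
  ![U 0 0 ^ 2 * n 0 + U 0 0 * U 1 0 * n 1 + U 1 0 ^ 2 * n 2,
    2 * U 0 0 * U 0 1 * n 0 + (U 0 0 * U 1 1 + U 0 1 * U 1 0) * n 1 + 2 * U 1 0 * U 1 1 * n 2,
    U 0 1 ^ 2 * n 0 + U 0 1 * U 1 1 * n 1 + U 1 1 ^ 2 * n 2]

lemma formAct_one (n : Fin 3 → ℤ) : formAct 1 n = n := by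
  funext i
  fin_cases i <;> simp [formAct]

lemma formAct_mul (U V : Matrix (Fin 2) (Fin 2) ℤ) (n : Fin 3 → ℤ) :
    formAct (U * V) n = formAct V (formAct U n) := by
  funext i
  fin_cases i <;> simp [formAct, mul_apply, Fin.sum_univ_two] <;> ring

lemma qExp_moeb_levi {U : Matrix (Fin 2) (Fin 2) ℤ} (hU : U.det * U.det = 1) (n : Fin 3 → ℤ)
    {τ : Fin 2 → Fin 2 → ℂ} (hτ : τ ∈ H2) :
    qExp n (moeb (levi U) τ) = qExp (formAct U n) τ := by
  have entries (i l : Fin 2) : moeb (levi U) τ i l = _ :=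
    congrFun (congrFun (moeb_levi hU τ) i) l
  simp only [qExp, entries, mul_apply, Fin.sum_univ_two, formAct, of_apply, map_apply,
    transpose_apply, symm_of_mem_H2 hτ]
  congr 1
  simp
  ring

theorem HasFourierExpansion.eq_wt_formAct (ha : HasFourierExpansion F a)
    (hF : IsSiegelForm j k ε F) {U : Matrix (Fin 2) (Fin 2) ℤ} (hU : U.det * U.det = 1)
    (n : Fin 3 → ℤ) :
    a n = ε (levi U) •
      wt j k ((U.det : ℂ) • !![(U 1 1 : ℂ), -U 1 0; -U 0 1, U 0 0]) (a (formAct U n)) := by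
  let V : Matrix (Fin 2) (Fin 2) ℤ := U.det • U.adjugate
  let e : (Fin 3 → ℤ) ≃ (Fin 3 → ℤ) :=
    { toFun := formAct U
      invFun := formAct V
      left_inv n := by rw [← formAct_mul, mul_smul_comm, mul_adjugate, smul_smul, hU, one_smul,
        formAct_one]
      right_inv n := by rw [← formAct_mul, smul_mul_assoc, adjugate_mul, smul_smul, hU, one_smul,
        formAct_one] }
  have formAct_eq (m) : formAct U m = e m := rfl
  set M : Matrix (Fin 2) (Fin 2) ℂ := (U.det : ℂ) • !![(U 1 1 : ℂ), -U 1 0; -U 0 1, U 0 0]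
  have hmem := levi_mem_Sp4Z hU
  have pullback : HasFourierExpansion (fun τ => F (moeb (levi U) τ)) fun m => a (e.symm m) :=
    fun τ hτ => by
      have h := ha _ (moeb_mem_H2 hmem hτ)
      simp only [qExp_moeb_levi hU _ hτ, formAct_eq] at h
      refine e.hasSum_iff.1 ?_
      simpa only [Function.comp_def, e.symm_apply_apply] using h
  have transformed : HasFourierExpansion (fun τ => F (moeb (levi U) τ))
      fun m => ε (levi U) • wtCLM j k M (a m) := fun τ hτ => by
    have map_levi : F (moeb (levi U) τ) = ε (levi U) • wtCLM j k M (F τ) := by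
      rw [hF.map_moeb _ hmem τ hτ, den_levi]
      rfl
    have h := ((ha τ hτ).mapL (wtCLM j k M)).const_smul (ε (levi U))
    simpa only [map_levi, map_smul, smul_comm (qExp _ τ)] using h
  have h := congrFun (pullback.unique transformed) (formAct U n)
  rwa [formAct_eq, e.symm_apply_apply] at h

end SiegelFourier

/-! ### The Koecher principle -/

section Koecher

/-- The half-integral symmetric matrix `!![n 0, n 1 / 2; n 1 / 2, n 2]` is positive definite and
its coefficients `n` are odd. These are the indices that occur in Fourier expansions of forms with
character `ε`. -/
structure IsOddPosDef (n : Fin 3 → ℤ) : Prop where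
  odd : ∀ i, Odd (n i)
  fst_pos : 0 < n 0
  snd_pos : 0 < n 2
  sq_lt : n 1 ^ 2 < 4 * n 0 * n 2

lemma diagH_mem_H2 {x y : ℂ} (hx : 0 < x.im) (hy : 0 < y.im) : diagH x y ∈ H2 :=
  mem_H2_iff.2 ⟨by simp [diagH], by simpa [diagH], by simpa [imDet, diagH] using mul_pos hx hy⟩

lemma norm_evalForm_le {j : ℕ} {x y : ℂ} {B : ℝ} (hx : ‖x‖ ≤ B) (hy : ‖y‖ ≤ B)
    (v : Fin (j + 1) → ℂ) : ‖evalForm x y v‖ ≤ (j + 1) * (‖v‖ * B ^ j) := by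
  have hterm (i : Fin (j + 1)) : ‖v i * (x ^ (j - (i : ℕ)) * y ^ (i : ℕ))‖ ≤ ‖v‖ * B ^ j := by
    have hB : 0 ≤ B := (norm_nonneg x).trans hx
    have hpow : ‖x‖ ^ (j - (i : ℕ)) * ‖y‖ ^ (i : ℕ) ≤ B ^ j := calc
      _ ≤ B ^ (j - (i : ℕ)) * B ^ (i : ℕ) := by gcongr
      _ = B ^ j := by rw [← pow_add, Nat.sub_add_cancel i.is_le]
    rw [norm_mul, norm_mul, norm_pow, norm_pow]
    exact mul_le_mul (norm_le_pi_norm v i) hpow (by positivity) (norm_nonneg v)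
  rw [evalForm_apply]
  simpa using norm_sum_le_of_le Finset.univ fun i _ => hterm i

variable {j : ℕ} {k : ℤ} {ε : Matrix (Fin 4) (Fin 4) ℤ → ℂ}
  {F : (Fin 2 → Fin 2 → ℂ) → Fin (j + 1) → ℂ} {a : (Fin 3 → ℤ) → Fin (j + 1) → ℂ} {n : Fin 3 → ℤ}

namespace HasFourierExpansion

lemma exists_norm_le (ha : HasFourierExpansion F a) :
    ∃ C, ∀ n, ‖a n‖ ≤ C * Real.exp (Real.pi * (n 0 + n 2)) := by
  have hsum := (ha _ (diagH_mem_H2 (x := I) (y := I) (by simp) (by simp))).summable.norm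
  refine ⟨∑' n, ‖qExp n (diagH I I) • a n‖, fun n => ?_⟩
  have hle := hsum.le_tsum n fun m _ => norm_nonneg _
  rw [norm_smul, norm_qExp, Real.exp_neg, inv_mul_le_iff₀ (Real.exp_pos _), mul_comm] at hle
  simpa [imPairing, diagH] using hle

lemma evalForm_eq (ha : HasFourierExpansion F a) (hF : IsSiegelForm j k ε F)
    {U : Matrix (Fin 2) (Fin 2) ℤ} (hU : U.det * U.det = 1) (n : Fin 3 → ℤ) (x y : ℂ) :
    evalForm x y (a n) = ε (levi U) * ((U.det : ℂ) ^ k *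
      evalForm (U.det * (U 1 1 * x - U 0 1 * y)) (U.det * (U 0 0 * y - U 1 0 * x))
        (a (formAct U n))) := by
  have hdet : ((U.det : ℂ) • !![(U 1 1 : ℂ), -U 1 0; -U 0 1, U 0 0]).det = U.det := by
    have hU' : (U.det : ℂ) * U.det = 1 := mod_cast hU
    have hdet' : (U.det : ℂ) = U 0 0 * U 1 1 - U 0 1 * U 1 0 := mod_cast det_fin_two U
    rw [det_smul, det_fin_two_of, Fintype.card_fin]
    linear_combination (U 0 0 * U 1 1 - U 0 1 * U 1 0 : ℂ) * hU' - hdet'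
  rw [ha.eq_wt_formAct hF hU n, map_smul, smul_eq_mul, evalForm_wt, hdet]
  simp only [Matrix.smul_apply, of_apply, cons_val', cons_val_zero, cons_val_one, cons_val_fin_one,
    smul_eq_mul]
  ring_nf

lemma norm_evalForm_le_of_fst_neg (ha : HasFourierExpansion F a) (hε : IsEps ε)
    (hF : IsSiegelForm j k ε F) (hn : n 0 < 0) {C : ℝ}
    (hC : ∀ n, ‖a n‖ ≤ C * Real.exp (Real.pi * (n 0 + n 2))) (x y : ℂ) (K : ℕ) :
    ‖evalForm x y (a n)‖ ≤ (j + 1) * C * Real.exp (Real.pi * n 2) * (1 + ‖x‖ + ‖y‖) ^ j *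
      (((K : ℝ) + 1) ^ j * Real.exp (-((K : ℝ) + 1))) := by
  obtain ⟨s, hs, hsn⟩ : ∃ s : ℤ, (s = 1 ∨ s = -1) ∧ s * n 1 ≤ 0 :=
    (le_total (n 1) 0).elim (fun h => ⟨1, by simpa using h⟩) fun h => ⟨-1, by simpa using h⟩
  have norm_s : ‖(s : ℂ)‖ = 1 := by rcases hs with rfl | rfl <;> simp
  have sq_s : s ^ 2 = 1 := by rcases hs with rfl | rfl <;> simp
  set U : Matrix (Fin 2) (Fin 2) ℤ := !![1, s * K; 0, 1] with hU
  have hdet : U.det = 1 := by simp [hU]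
  have hC0 : 0 ≤ C := nonneg_of_mul_nonneg_left ((norm_nonneg _).trans (hC 0)) (Real.exp_pos _)
  have trace_le : formAct U n 0 + formAct U n 2 ≤ n 2 - (K + 1) := by
    have hK : (K : ℤ) * (s * n 1) ≤ 0 := mul_nonpos_of_nonneg_of_nonpos (by positivity) hsn
    have hsq : (K : ℤ) ≤ K ^ 2 := mod_cast Nat.le_self_pow two_ne_zero K
    simp [formAct, hU, mul_pow, sq_s]
    nlinarith [mul_nonneg (by positivity : (0 : ℤ) ≤ K ^ 2 + 1) (by lia : 0 ≤ -1 - n 0)]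
  have norm_coeff_le : ‖a (formAct U n)‖ ≤
      C * (Real.exp (Real.pi * n 2) * Real.exp (-((K : ℝ) + 1))) := by
    refine (hC _).trans (mul_le_mul_of_nonneg_left ?_ hC0)
    rw [← Real.exp_add]
    have : (formAct U n 0 + formAct U n 2 : ℝ) ≤ n 2 - (K + 1) := mod_cast trace_le
    gcongr
    nlinarith [Real.pi_gt_three]
  have norm_eq : ‖evalForm x y (a n)‖ = ‖evalForm (x - s * K * y) y (a (formAct U n))‖ := by
    rw [ha.evalForm_eq hF (U := U) (by simp [hdet]), hdet, norm_mul,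
      hε.norm_eq_one (levi_mem_Sp4Z (by simp [hdet]))]
    simp [hU]
  rw [norm_eq]
  refine (norm_evalForm_le (B := (1 + ‖x‖ + ‖y‖) * (K + 1)) ?_ ?_ _).trans ?_
  · refine (norm_sub_le _ _).trans ?_
    rw [norm_mul, norm_mul, norm_s, norm_natCast]
    nlinarith [norm_nonneg x, norm_nonneg y, K.cast_nonneg (α := ℝ)]
  · nlinarith [norm_nonneg x, norm_nonneg y, K.cast_nonneg (α := ℝ)]
  · rw [mul_pow]
    calc _ ≤ ((j : ℝ) + 1) * (C * (Real.exp (Real.pi * n 2) * Real.exp (-((K : ℝ) + 1))) *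
          ((1 + ‖x‖ + ‖y‖) ^ j * ((K : ℝ) + 1) ^ j)) := by gcongr
      _ = _ := by ring

lemma eq_zero_of_fst_neg (ha : HasFourierExpansion F a) (hε : IsEps ε) (hF : IsSiegelForm j k ε F)
    (hn : n 0 < 0) : a n = 0 := by
  refine evalForm_ext fun t => ?_
  obtain ⟨C, hC⟩ := ha.exists_norm_le
  have hlim := ((Real.tendsto_pow_mul_exp_neg_atTop_nhds_zero j).comp
    (tendsto_atTop_add_const_right atTop (1 : ℝ) tendsto_natCast_atTop_atTop)).const_mul
      ((j + 1) * C * Real.exp (Real.pi * n 2) * (1 + ‖(1 : ℂ)‖ + ‖t‖) ^ j)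
  rw [mul_zero] at hlim
  rw [map_zero]
  exact norm_le_zero_iff.1
    (ge_of_tendsto' hlim (ha.norm_evalForm_le_of_fst_neg hε hF hn hC 1 t))

lemma formAct_fst_nonneg (ha : HasFourierExpansion F a) (hε : IsEps ε) (hF : IsSiegelForm j k ε F)
    (hn : a n ≠ 0) {U : Matrix (Fin 2) (Fin 2) ℤ} (hU : U.det * U.det = 1) :
    0 ≤ formAct U n 0 := by
  by_contra! hneg
  rw [ha.eq_wt_formAct hF hU n, ha.eq_zero_of_fst_neg hε hF hneg, wt_zero, smul_zero] at hn
  exact hn rfl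

theorem isOddPosDef (ha : HasFourierExpansion F a) (hε : IsEps ε) (hF : IsSiegelForm j k ε F)
    (hn : a n ≠ 0) : IsOddPosDef n := by
  have odd := ha.odd_of_ne_zero hε hF hn
  have fst_pos : 0 < n 0 := by
    have h := ha.formAct_fst_nonneg hε hF hn (U := 1) (by simp)
    rw [formAct_one] at h
    exact h.lt_of_ne fun h0 => by simpa [← h0] using odd 0
  have snd_pos : 0 < n 2 := by
    have h := ha.formAct_fst_nonneg hε hF hn (U := !![0, -1; 1, 0]) (by simp)
    simp only [formAct] at h
    exact lt_of_le_of_ne (by simpa using h) fun h0 => by simpa [← h0] using odd 2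
  have disc_ne : n 1 ^ 2 ≠ 4 * n 0 * n 2 := fun h => by
    have := (odd 1).pow (n := 2)
    rw [h, Int.odd_iff] at this
    lia
  refine ⟨odd, fst_pos, snd_pos, lt_of_le_of_ne (le_of_not_gt fun hlt => ?_) disc_ne⟩
  obtain ⟨A, hA⟩ := exists_SL2Z_mul_eq_zero (2 * n 0) (n 1)
  have hdet := SL2Z_det_eq_one A
  have form_nonneg := ha.formAct_fst_nonneg hε hF hn (U := !![A 1 0, -A 0 0; A 1 1, -A 0 1])
    (by rw [det_fin_two_of]; linear_combination (A 0 0 * A 1 1 - A 0 1 * A 1 0 + 1) * hdet)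
  have complete_square : 4 * n 0 * (A 1 0 ^ 2 * n 0 + A 1 0 * A 1 1 * n 1 + A 1 1 ^ 2 * n 2) =
      (4 * n 0 * n 2 - n 1 ^ 2) * A 1 1 ^ 2 := by
    linear_combination (2 * n 0 * A 1 0 + A 1 1 * n 1) * hA
  have hA11 : A 1 1 ≠ 0 := fun h0 => by
    have : A 1 0 = 0 := by simpa [h0, fst_pos.ne'] using hA
    simp [h0, this] at hdet
  have negative := mul_neg_of_neg_of_pos (sub_neg.2 hlt) (sq_pos_of_ne_zero hA11)
  rw [← complete_square] at negative
  exact negative.not_ge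
    (mul_nonneg (by positivity) (by simpa [formAct, mul_assoc] using form_nonneg))

end HasFourierExpansion

end Koecher

/-! ### Restriction to the diagonal -/

section LevelOne

open UpperHalfPlane ModularForm MatrixGroups Manifold

theorem eq_zero_of_weight_lt_twelve {k : ℤ} (hk : k < 12) {f : ℍ → ℂ}
    (hf : ∀ (γ : SL(2, ℤ)) (z : ℍ), f (γ • z) = ((γ 1 0 : ℂ) * z + γ 1 1) ^ k * f z)
    (hol : DifferentiableOn ℂ (f ∘ ofComplex) {z | 0 < z.im}) (hcusp : IsZeroAtImInfty f) :
    f = 0 := by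
  have hslash (γ : SL(2, ℤ)) : f ∣[k] γ = f :=
    funext fun z => (slash_action_eq'_iff k f γ z).2 (hf γ z)
  let g : CuspForm 𝒮ℒ k :=
    { toFun := f
      slash_action_eq' := by
        rintro _ ⟨γ, rfl⟩
        exact hslash γ
      holo' := mdifferentiable_iff.2 hol
      zero_at_cusps' := fun hc => (OnePoint.isZeroAt_iff_forall_SL2Z hc).2 fun γ _ =>
        (hslash γ).symm ▸ hcusp }
  have hg : g = 0 := rank_zero_iff_forall_zero.1 (CuspForm.rank_eq_zero_of_weight_lt_twelve hk) g
  exact congrArg (fun h : CuspForm 𝒮ℒ k => (h : ℍ → ℂ)) hg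

end LevelOne

section Diagonal

variable {j : ℕ} {k : ℤ} {ε : Matrix (Fin 4) (Fin 4) ℤ → ℂ}
  {F : (Fin 2 → Fin 2 → ℂ) → Fin (j + 1) → ℂ} {a : (Fin 3 → ℤ) → Fin (j + 1) → ℂ} {n : Fin 3 → ℤ}
  {x y : ℂ}

lemma symAct_diag (d : ℂ) (v : Fin (j + 1) → ℂ) :
    symAct j !![1, 0; 0, d] v = fun i : Fin (j + 1) => d ^ (i : ℕ) * v i :=
  evalForm_ext fun t => by
    rw [evalForm_symAct, evalForm_apply, evalForm_apply]
    refine Finset.sum_congr rfl fun i _ => ?_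
    simp
    ring

lemma den_embedSnd_diagH (A : Matrix.SpecialLinearGroup (Fin 2) ℤ) (x y : ℂ) :
    den (embedSnd A) (diagH x y) = !![1, 0; 0, A 1 0 * y + A 1 1] := by
  ext i l
  fin_cases i <;> fin_cases l <;>
    simp [den, blk, embedSnd, diagH, Matrix.mul_apply]

lemma moeb_embedSnd_diagH (A : Matrix.SpecialLinearGroup (Fin 2) ℤ) (hx : 0 < x.im)
    (hy : 0 < y.im) : moeb (embedSnd A) (diagH x y) =
      diagH x ((A 0 0 * y + A 0 1) / (A 1 0 * y + A 1 1)) := by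
  have hτ := diagH_mem_H2 hx hy
  have hdet := isUnit_det_den (embedSnd_mem_Sp4Z A) hτ
  have hnum : num (embedSnd A) (diagH x y) =
      of (diagH x ((A 0 0 * y + A 0 1) / (A 1 0 * y + A 1 1))) * den (embedSnd A) (diagH x y) := by
    rw [den_embedSnd_diagH] at hdet ⊢
    have hden : (A 1 0 * y + A 1 1 : ℂ) ≠ 0 := by simpa [det_fin_two_of] using hdet
    ext i l
    fin_cases i <;> fin_cases l <;>
      simp [num, blk, embedSnd, diagH, Matrix.mul_apply, hden]
  exact (IsUnit.mul_left_inj ((isUnit_iff_isUnit_det _).2 hdet)).1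
    ((moeb_mul_den (embedSnd_mem_Sp4Z A) hτ).trans hnum)

lemma IsSiegelForm.sq_map_diagH (hε : IsEps ε) (hF : IsSiegelForm j k ε F)
    (A : Matrix.SpecialLinearGroup (Fin 2) ℤ) (hx : 0 < x.im) (hy : 0 < y.im) (i : Fin (j + 1)) :
    F (diagH x ((A 0 0 * y + A 0 1) / (A 1 0 * y + A 1 1))) i ^ 2 =
      (A 1 0 * y + A 1 1 : ℂ) ^ (2 * (k + i)) * F (diagH x y) i ^ 2 := by
  have hτ := diagH_mem_H2 hx hy
  have hA := embedSnd_mem_Sp4Z A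
  have hden : (A 1 0 * y + A 1 1 : ℂ) ≠ 0 := by
    simpa [den_embedSnd_diagH, det_fin_two_of] using det_den_ne_zero hA hτ
  rw [← moeb_embedSnd_diagH A hx hy, hF.map_moeb _ hA _ hτ, wt, den_embedSnd_diagH, symAct_diag,
    mul_comm 2 (k + _), _root_.zpow_mul, zpow_add₀ hden, zpow_natCast]
  simp only [Pi.smul_apply, smul_eq_mul, det_fin_two_of, one_mul, mul_zero, sub_zero]
  rw [mul_pow, sq (ε _), hε.map_mul_self hA, one_mul]
  norm_cast
  ring

lemma differentiable_diagH (x : ℂ) : Differentiable ℂ (diagH x) :=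
  differentiable_pi.2 fun i => differentiable_pi.2 fun l => by
    fin_cases i <;> fin_cases l <;> simp [diagH]

namespace HasFourierExpansion

lemma norm_le_tsum_mul_exp (ha : HasFourierExpansion F a) {τ₀ τ : Fin 2 → Fin 2 → ℂ}
    (hτ₀ : τ₀ ∈ H2) (hτ : τ ∈ H2) {c : ℝ}
    (hc : ∀ n, a n ≠ 0 → imPairing n τ₀ + c ≤ imPairing n τ) :
    ‖F τ‖ ≤ (∑' n, ‖qExp n τ₀ • a n‖) * Real.exp (-(Real.pi * c)) := by
  rw [← (ha τ hτ).tsum_eq, ← tsum_mul_right]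
  refine tsum_of_norm_bounded ((ha τ₀ hτ₀).summable.norm.mul_right _).hasSum fun n => ?_
  obtain han | han := eq_or_ne (a n) 0
  · simp [han]
  rw [norm_smul, norm_smul, norm_qExp, norm_qExp, mul_right_comm, ← Real.exp_add, ← neg_add,
    ← mul_add]
  gcongr
  exact hc n han

lemma norm_diagH_le (ha : HasFourierExpansion F a) (hε : IsEps ε) (hF : IsSiegelForm j k ε F)
    (hx : 0 < x.im) (hy : 1 ≤ y.im) : ‖F (diagH x y)‖ ≤
      (∑' n, ‖qExp n (diagH x I) • a n‖) * Real.exp (-(Real.pi * (y.im - 1))) := by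
  refine ha.norm_le_tsum_mul_exp (diagH_mem_H2 hx (by simp)) (diagH_mem_H2 hx (by linarith))
    fun n hn => ?_
  have snd_pos : (1 : ℝ) ≤ n 2 := mod_cast (ha.isOddPosDef hε hF hn).snd_pos
  simp only [imPairing, diagH]
  simp
  nlinarith

end HasFourierExpansion

/-- The square of the `i`-th coordinate, as a function of the second diagonal entry, is a cusp form
of level one and weight `2 (k + i)`. -/
theorem IsSiegelForm.diagH_apply_eq_zero (hε : IsEps ε) (hF : IsSiegelForm j k ε F)
    (hx : 0 < x.im) (hy : 0 < y.im) {i : Fin (j + 1)} (hi : k + i < 6) :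
    F (diagH x y) i = 0 := by
  obtain ⟨a, ha⟩ := hF.exists_hasFourierExpansion hε
  have hzero := eq_zero_of_weight_lt_twelve (k := 2 * (k + i)) (by linarith)
    (f := fun z => F (diagH x z) i ^ 2) (fun A z => ?_) ?_ ?_
  · simpa using congrFun hzero ⟨y, hy⟩
  · rw [UpperHalfPlane.specialLinearGroup_apply]
    simpa using hF.sq_map_diagH hε A hx z.im_pos i
  · have hdiff : DifferentiableOn ℂ (fun z => F (diagH x z)) {z | 0 < z.im} :=
      hF.differentiableOn.comp (differentiable_diagH x).differentiableOn
        fun z hz => diagH_mem_H2 hx hz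
    refine ((differentiableOn_pi.1 hdiff i).pow 2).congr fun z hz => ?_
    simp [UpperHalfPlane.ofComplex_apply_of_im_pos hz]
  · have hexp : Tendsto (fun t : ℝ => Real.exp (-(Real.pi * (t - 1)))) atTop (𝓝 0) :=
      Real.tendsto_exp_neg_atTop_nhds_zero.comp
        ((tendsto_atTop_add_const_right _ _ tendsto_id).const_mul_atTop Real.pi_pos)
    have him : Tendsto UpperHalfPlane.im UpperHalfPlane.atImInfty atTop := tendsto_comap
    have hbound := ((hexp.const_mul (∑' n, ‖qExp n (diagH x I) • a n‖)).comp him).pow 2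
    rw [mul_zero, zero_pow two_ne_zero] at hbound
    refine squeeze_zero_norm' ?_ hbound
    filter_upwards [him.eventually_ge_atTop 1] with z hz
    rw [norm_pow]
    gcongr
    exact (norm_le_pi_norm _ i).trans (ha.norm_diagH_le hε hF hx hz)

lemma IsOddPosDef.eq_of_add_le_two (hn : IsOddPosDef n) (h : n 0 + n 2 ≤ 2) :
    n = ![1, 1, 1] ∨ n = ![1, -1, 1] := by
  have h₀ : n 0 = 1 := by linarith [hn.fst_pos, hn.snd_pos]
  have h₂ : n 2 = 1 := by linarith [hn.fst_pos, hn.snd_pos]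
  obtain ⟨hlo, hhi⟩ : -2 < n 1 ∧ n 1 < 2 :=
    abs_lt.1 (abs_lt_of_sq_lt_sq (by simpa [h₀, h₂] using hn.sq_lt) two_pos.le)
  obtain ⟨m, hm⟩ := hn.odd 1
  obtain h₁ | h₁ : n 1 = 1 ∨ n 1 = -1 := by lia
  · exact .inl (funext fun i => by fin_cases i <;> simp [h₀, h₁, h₂])
  · exact .inr (funext fun i => by fin_cases i <;> simp [h₀, h₁, h₂])

lemma cexp_mul_qExp_diagH (n : Fin 3 → ℤ) (t : ℝ) :
    cexp (2 * Real.pi * t) * qExp n (diagH (t * I) (t * I)) =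
      (Real.exp (-(Real.pi * (n 0 + n 2 - 2) * t)) : ℝ) := by
  rw [qExp, ← Complex.exp_add, ofReal_exp]
  congr 1
  simp [diagH]
  linear_combination (Real.pi * (n 0 + n 2) * t : ℂ) * I_mul_I

lemma IsOddPosDef.tendsto_cexp_mul_qExp_diagH (hn : IsOddPosDef n) :
    Tendsto (fun t : ℝ => cexp (2 * Real.pi * t) * qExp n (diagH (t * I) (t * I))) atTop
      (𝓝 (if n = ![1, 1, 1] ∨ n = ![1, -1, 1] then 1 else 0)) := by
  simp only [cexp_mul_qExp_diagH]
  split_ifs with hmin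
  · have hadd : (n 0 + n 2 - 2 : ℝ) = 0 := by
      rcases hmin with rfl | rfl <;> simp [one_add_one_eq_two]
    simp [hadd]
  · have hadd : (0 : ℝ) < n 0 + n 2 - 2 :=
      sub_pos.2 (mod_cast not_le.1 (mt hn.eq_of_add_le_two hmin))
    exact (continuous_ofReal.tendsto 0).comp (Real.tendsto_exp_neg_atTop_nhds_zero.comp
      (tendsto_id.const_mul_atTop (mul_pos Real.pi_pos hadd)))

lemma IsOddPosDef.norm_cexp_mul_qExp_diagH_anti (hn : IsOddPosDef n) :
    Antitone fun t : ℝ => ‖cexp (2 * Real.pi * t) * qExp n (diagH (t * I) (t * I))‖ := by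
  have hadd : (0 : ℝ) ≤ n 0 + n 2 - 2 :=
    sub_nonneg.2 (mod_cast (by linarith [hn.fst_pos, hn.snd_pos] : 2 ≤ n 0 + n 2))
  intro s t hst
  simp only [cexp_mul_qExp_diagH, norm_real, Real.norm_eq_abs, Real.abs_exp]
  gcongr

lemma HasFourierExpansion.tendsto_cexp_smul_diagH (ha : HasFourierExpansion F a) (hε : IsEps ε)
    (hF : IsSiegelForm j k ε F) :
    Tendsto (fun t : ℝ => cexp (2 * Real.pi * t) • F (diagH (t * I) (t * I))) atTop
      (𝓝 (a ![1, 1, 1] + a ![1, -1, 1])) := by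
  have hsum (t : ℝ) (ht : 0 < t) : HasSum
      (fun n => (cexp (2 * Real.pi * t) * qExp n (diagH (t * I) (t * I))) • a n)
      (cexp (2 * Real.pi * t) • F (diagH (t * I) (t * I))) := by
    simpa only [mul_smul] using
      (ha _ (diagH_mem_H2 (by simpa) (by simpa))).const_smul (cexp (2 * Real.pi * t))
  have hlim := tendsto_tsum_of_dominated_convergence (𝓕 := (atTop : Filter ℝ))
    (f := fun t n => (cexp (2 * Real.pi * t) * qExp n (diagH (t * I) (t * I))) • a n)
    (g := fun n => (if n = ![1, 1, 1] ∨ n = ![1, -1, 1] then (1 : ℂ) else 0) • a n)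
    (hsum 1 one_pos).summable.norm (fun n => ?_) ?_
  · rw [tsum_eq_sum (s := {![1, 1, 1], ![1, -1, 1]}) fun n hn => by
      rw [if_neg (by simpa using hn), zero_smul], Finset.sum_pair (by decide)] at hlim
    simp only [true_or, or_true, if_true, one_smul] at hlim
    refine hlim.congr' ?_
    filter_upwards [eventually_gt_atTop 0] with t ht using (hsum t ht).tsum_eq
  · obtain han | han := eq_or_ne (a n) 0
    · simp [han]
    · exact (ha.isOddPosDef hε hF han).tendsto_cexp_mul_qExp_diagH.smul_const _
  · filter_upwards [eventually_ge_atTop 1] with t ht n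
    obtain han | han := eq_or_ne (a n) 0
    · simp [han]
    rw [norm_smul, norm_smul]
    gcongr ?_ * _
    exact (ha.isOddPosDef hε hF han).norm_cexp_mul_qExp_diagH_anti ht

lemma HasFourierExpansion.minimal_add_apply_eq_zero (ha : HasFourierExpansion F a) (hε : IsEps ε)
    (hF : IsSiegelForm j k ε F) {i : Fin (j + 1)} (hi : k + i < 6) :
    (a ![1, 1, 1] + a ![1, -1, 1]) i = 0 := by
  refine tendsto_nhds_unique
    (((continuous_apply i).tendsto _).comp (ha.tendsto_cexp_smul_diagH hε hF)) ?_
  refine tendsto_const_nhds.congr' ?_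
  filter_upwards [eventually_gt_atTop 0] with t ht
  simp [hF.diagH_apply_eq_zero hε (x := t * I) (y := t * I) (by simpa) (by simpa) hi]

end Diagonal

/-! ### Vanishing of the minimal coefficients -/

section Support

variable {j : ℕ} {k : ℤ} {ε : Matrix (Fin 4) (Fin 4) ℤ → ℂ}
  {F : (Fin 2 → Fin 2 → ℂ) → Fin (j + 1) → ℂ} {a : (Fin 3 → ℤ) → Fin (j + 1) → ℂ} {n : Fin 3 → ℤ}

namespace HasFourierExpansion

lemma evalForm_minimal (ha : HasFourierExpansion F a) (hε : IsEps ε) (hF : IsSiegelForm j k ε F)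
    (hk : Even k) (x y : ℂ) :
    evalForm x y (a ![1, 1, 1]) = evalForm x (-y) (a ![1, -1, 1]) := by
  have hact : formAct !![1, 0; 0, -1] ![1, 1, 1] = ![1, -1, 1] := by decide
  rw [ha.evalForm_eq hF (U := !![1, 0; 0, -1]) (by decide), hε.levi_diag, hact]
  simp [hk.neg_one_zpow]

lemma minimal_apply (ha : HasFourierExpansion F a) (hε : IsEps ε) (hF : IsSiegelForm j k ε F)
    (hk : Even k) (i : Fin (j + 1)) :
    a ![1, 1, 1] i = (-1) ^ (i : ℕ) * a ![1, -1, 1] i := by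
  have h : a ![1, 1, 1] = symAct j !![1, 0; 0, -1] (a ![1, -1, 1]) :=
    evalForm_ext fun t => by simp [ha.evalForm_minimal hε hF hk, evalForm_symAct]
  rw [h, symAct_diag]

lemma evalForm_minimal_swap (ha : HasFourierExpansion F a) (hF : IsSiegelForm j k ε F)
    (hk : Even k) (x y : ℂ) : evalForm x y (a ![1, -1, 1]) =
      ε (levi !![0, 1; 1, 0]) * evalForm y x (a ![1, -1, 1]) := by
  have hact : formAct !![0, 1; 1, 0] ![1, -1, 1] = ![1, -1, 1] := by decide
  rw [ha.evalForm_eq hF (U := !![0, 1; 1, 0]) (by decide), hact]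
  simp [hk.neg_one_zpow]

lemma evalForm_minimal_rotation (ha : HasFourierExpansion F a) (hε : IsEps ε)
    (hF : IsSiegelForm j k ε F) (x y : ℂ) :
    evalForm x y (a ![1, -1, 1]) = evalForm (y - x) (-x) (a ![1, -1, 1]) := by
  have hact : formAct !![0, -1; 1, -1] ![1, -1, 1] = ![1, -1, 1] := by decide
  rw [ha.evalForm_eq hF (U := !![0, -1; 1, -1]) (by decide), hε.levi_rotation, hact]
  simp [neg_add_eq_sub]

/-- The coefficient is invariant, up to sign, under the stabilizer of `![1, -1, 1]` in `GL(2,ℤ)`,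
and its coordinates `0` and `2` vanish because those of `F` do so on the diagonal. -/
lemma minimal_neg_eq_zero (ha : HasFourierExpansion F a) (hε : IsEps ε)
    (hF : IsSiegelForm j k ε F) (hk : Even k) (hk4 : k < 4) (hj : Even j) (hj10 : j ≤ 10) :
    a ![1, -1, 1] = 0 := by
  refine evalForm_eq_zero_of_dihedral hj hj10 (hε.1 _ (levi_mem_Sp4Z (by decide)))
    (ha.evalForm_minimal_swap hF hk) (ha.evalForm_minimal_rotation hε hF) fun i hi => ?_
  have hadd := ha.minimal_add_apply_eq_zero hε hF (i := i) (by lia)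
  have heven : Even (i : ℕ) := by rcases hi with hi | hi <;> simp [hi]
  rw [Pi.add_apply, ha.minimal_apply hε hF hk, heven.neg_one_pow, one_mul] at hadd
  exact add_self_eq_zero.1 hadd

end HasFourierExpansion

lemma IsOddPosDef.six_add_abs_le_or_exists_formAct (hn : IsOddPosDef n) :
    6 + |n 1| ≤ 2 * (n 0 + n 2) ∨
      ∃ U : Matrix (Fin 2) (Fin 2) ℤ, U.det = 1 ∧
        (formAct U n = ![1, 1, 1] ∨ formAct U n = ![1, -1, 1]) := by
  obtain ⟨m₀, h₀⟩ := hn.odd 0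
  obtain ⟨m₁, h₁⟩ := hn.odd 1
  obtain ⟨m₂, h₂⟩ := hn.odd 2
  have fst_pos := hn.fst_pos
  have snd_pos := hn.snd_pos
  have hsq := hn.sq_lt
  obtain hle | hlt := le_or_gt (n 0 + n 2) 2
  · exact .inr ⟨1, det_one, by simpa only [formAct_one] using hn.eq_of_add_le_two hle⟩
  obtain hlt' | hge := lt_or_ge (n 0 + n 2) 6
  · obtain ⟨hn₀, hn₂⟩ | ⟨hn₀, hn₂⟩ : n 0 = 1 ∧ n 2 = 3 ∨ n 0 = 3 ∧ n 2 = 1 := by lia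
    all_goals
      rw [hn₀, hn₂] at hsq
      obtain ⟨hlo, hhi⟩ : -4 < n 1 ∧ n 1 < 4 :=
        abs_lt.1 (abs_lt_of_sq_lt_sq (by linarith) (by norm_num))
      obtain hn₁ | hn₁ | hn₁ : (-2 ≤ n 1 ∧ n 1 ≤ 2) ∨ n 1 = 3 ∨ n 1 = -3 := by lia
      · exact .inl (by linarith [abs_le.2 hn₁])
    · exact .inr ⟨!![1, -1; 0, 1], by decide, .inl (by simp [formAct, hn₀, hn₁, hn₂])⟩
    · exact .inr ⟨!![1, 1; 0, 1], by decide, .inr (by simp [formAct, hn₀, hn₁, hn₂])⟩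
    · exact .inr ⟨!![1, 0; -1, 1], by decide, .inl (by simp [formAct, hn₀, hn₁, hn₂])⟩
    · exact .inr ⟨!![1, 0; 1, 1], by decide, .inr (by simp [formAct, hn₀, hn₁, hn₂])⟩
  · have : |n 1| ≤ n 0 + n 2 :=
      abs_le_of_sq_le_sq (by nlinarith [sq_nonneg (n 0 - n 2)]) (by lia)
    exact .inl (by lia)

theorem HasFourierExpansion.six_add_abs_le (ha : HasFourierExpansion F a) (hε : IsEps ε)
    (hF : IsSiegelForm j k ε F) (hk : Even k) (hk4 : k < 4) (hj : Even j) (hj10 : j ≤ 10)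
    (hn : a n ≠ 0) : 6 + |n 1| ≤ 2 * (n 0 + n 2) := by
  have hneg := ha.minimal_neg_eq_zero hε hF hk hk4 hj hj10
  have hpos : a ![1, 1, 1] = 0 := funext fun i => by
    rw [ha.minimal_apply hε hF hk, hneg, Pi.zero_apply, mul_zero]
  refine (ha.isOddPosDef hε hF hn).six_add_abs_le_or_exists_formAct.resolve_right ?_
  rintro ⟨U, hU, hmin⟩
  have hzero : a (formAct U n) = 0 := by rcases hmin with h | h <;> rwa [h]
  rw [ha.eq_wt_formAct hF (by rw [hU, one_mul]) n, hzero, wt_zero, smul_zero] at hn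
  exact hn rfl

section Reduced

variable {τ : Fin 2 → Fin 2 → ℂ}

lemma three_mul_im_le_imPairing (hτ : IsMinkowskiReduced τ) (hsnd : 0 ≤ n 2)
    (hn : 6 + |n 1| ≤ 2 * (n 0 + n 2)) : 3 * (τ 0 0).im ≤ imPairing n τ := by
  have fst_nonneg : 0 ≤ (τ 0 0).im := (by positivity : (0 : ℝ) ≤ _).trans hτ.1
  have hn' : (6 : ℝ) + |(n 1 : ℝ)| ≤ 2 * (n 0 + n 2) := mod_cast hn
  have hsnd' : (0 : ℝ) ≤ n 2 := mod_cast hsnd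
  have hoff : -(|(n 1 : ℝ)| * ((τ 0 0).im / 2)) ≤ n 1 * (τ 0 1).im := calc
    _ ≤ -(|(n 1 : ℝ)| * |(τ 0 1).im|) := by
      gcongr
      linarith [hτ.1]
    _ ≤ n 1 * (τ 0 1).im := by
      rw [← abs_mul]
      exact neg_abs_le _
  rw [imPairing]
  nlinarith [mul_le_mul_of_nonneg_left hτ.2 hsnd']

lemma IsOddPosDef.add_le_two_mul_imPairing (hn : IsOddPosDef n) (hτ : IsMinkowskiReduced τ) :
    n 0 * (τ 0 0).im + n 2 * (τ 1 1).im ≤ 2 * imPairing n τ := by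
  have fst_pos : (0 : ℝ) < n 0 := mod_cast hn.fst_pos
  have snd_pos : (0 : ℝ) < n 2 := mod_cast hn.snd_pos
  have fst_nonneg : 0 ≤ (τ 0 0).im := (by positivity : (0 : ℝ) ≤ _).trans hτ.1
  have snd_nonneg := fst_nonneg.trans hτ.2
  have hsq : (2 * (n 1 * (τ 0 1).im)) ^ 2 ≤ (n 0 * (τ 0 0).im + n 2 * (τ 1 1).im) ^ 2 := calc
    _ = (n 1 : ℝ) ^ 2 * (2 * |(τ 0 1).im|) ^ 2 := by
      rw [mul_pow, mul_pow, mul_pow, sq_abs]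
      ring
    _ ≤ 4 * n 0 * n 2 * ((τ 0 0).im * (τ 1 1).im) := by
      refine mul_le_mul (mod_cast hn.sq_lt.le) ?_ (by positivity) (by positivity)
      rw [sq]
      exact mul_le_mul hτ.1 (hτ.1.trans hτ.2) (by positivity) fst_nonneg
    _ ≤ (n 0 * (τ 0 0).im + n 2 * (τ 1 1).im) ^ 2 := by
      nlinarith [sq_nonneg (n 0 * (τ 0 0).im - n 2 * (τ 1 1).im)]
  have := neg_abs_le (2 * (n 1 * (τ 0 1).im))
  have := abs_le_of_sq_le_sq hsq (by positivity)
  rw [imPairing]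
  linarith

end Reduced

end Support

/-! ### A Phragmén–Lindelöf bound -/

section PhragmenLindelofBound

variable {E : Type*} [NormedAddCommGroup E] [NormedSpace ℂ E] {f : ℂ → E} {s c B C : ℝ} {w : ℂ}

/-- Apply the Phragmén–Lindelöf principle to `exp (c ζ) f (i (ζ + s))` on the right half-plane. -/
theorem norm_mul_exp_le_of_im_eq (hs : 0 < s) (hf : DifferentiableOn ℂ f {w | 0 < w.im})
    (hB : ∀ w : ℂ, s ≤ w.im → ‖f w‖ ≤ B * Real.exp (-(c * w.im)))
    (hC : ∀ w : ℂ, w.im = s → ‖f w‖ ≤ C) (hw : s ≤ w.im) :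
    ‖f w‖ * Real.exp (c * (w.im - s)) ≤ C := by
  let G : ℂ → E := fun ζ => cexp (c * ζ) • f (I * (ζ + s))
  have him (ζ : ℂ) : (I * (ζ + s)).im = ζ.re + s := by simp
  have norm_G (ζ : ℂ) : ‖G ζ‖ = Real.exp (c * ζ.re) * ‖f (I * (ζ + s))‖ := by
    simp [G, norm_smul, Complex.norm_exp]
  have bound_G (ζ : ℂ) (hζ : 0 ≤ ζ.re) : ‖G ζ‖ ≤ B * Real.exp (-(c * s)) := calc
    _ ≤ Real.exp (c * ζ.re) * (B * Real.exp (-(c * (ζ.re + s)))) := by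
      rw [norm_G, ← him]
      gcongr
      exact hB _ (by linarith [him ζ])
    _ = B * Real.exp (-(c * s)) := by
      rw [mul_left_comm, ← Real.exp_add]
      ring_nf
  have diff_G : DiffContOnCl ℂ G {ζ | 0 < ζ.re} := by
    refine DifferentiableOn.diffContOnCl
      (.smul (by fun_prop) (hf.comp (by fun_prop) fun ζ hζ => ?_))
    rw [Complex.closure_setOfPred_lt_re] at hζ
    simpa [him] using add_pos_of_nonneg_of_pos hζ hs
  have hmain : ‖G (-I * w - s)‖ ≤ C := by
    refine PhragmenLindelof.right_half_plane_of_bounded_on_real diff_G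
      ⟨0, two_pos, 0, .of_bound (B * Real.exp (-(c * s))) ?_⟩
      (isBoundedUnder_of_eventually_le (a := B * Real.exp (-(c * s))) ?_) (fun t => ?_)
      (by simpa using hw)
    · refine Filter.Eventually.filter_mono inf_le_right (eventually_principal.2 fun ζ hζ => ?_)
      simpa using bound_G ζ (le_of_lt hζ)
    · filter_upwards [eventually_ge_atTop 0] with t ht
      exact bound_G t (by simpa)
    · rw [norm_G]
      simpa using hC (I * (t * I + s)) (by simp)
  have hpoint : I * (-I * w - s + s) = w := by linear_combination -w * I_mul_I
  rw [norm_G, hpoint, mul_comm] at hmain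
  simpa using hmain

end PhragmenLindelofBound

section ImLine

variable {τ : Fin 2 → Fin 2 → ℂ} {w : ℂ}

/-- The point `Re τ + w Im τ`, for fixed `τ` a holomorphic curve in `w` through `τ` at `w = i`. -/
def imLine (τ : Fin 2 → Fin 2 → ℂ) (w : ℂ) : Fin 2 → Fin 2 → ℂ :=
  fun i j => (τ i j).re + w * (τ i j).im

lemma imLine_I (τ : Fin 2 → Fin 2 → ℂ) : imLine τ I = τ := by
  funext i j
  rw [imLine, mul_comm, re_add_im]

lemma im_imLine (τ : Fin 2 → Fin 2 → ℂ) (w : ℂ) (i j : Fin 2) :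
    (imLine τ w i j).im = w.im * (τ i j).im := by
  simp [imLine]

lemma imDet_imLine (τ : Fin 2 → Fin 2 → ℂ) (w : ℂ) :
    imDet (imLine τ w) = w.im ^ 2 * imDet τ := by
  simp only [imDet, im_imLine]
  ring

lemma imForm_imLine (τ : Fin 2 → Fin 2 → ℂ) (w x y : ℂ) :
    imForm (imLine τ w) x y = w.im * imForm τ x y := by
  simp only [imForm, im_imLine]
  ring

lemma imPairing_imLine (n : Fin 3 → ℤ) (τ : Fin 2 → Fin 2 → ℂ) (w : ℂ) :
    imPairing n (imLine τ w) = w.im * imPairing n τ := by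
  simp only [imPairing, im_imLine]
  ring

lemma imLine_mem_H2 (hτ : τ ∈ H2) (hw : 0 < w.im) : imLine τ w ∈ H2 := by
  refine mem_H2_iff.2 ⟨?_, ?_, ?_⟩
  · simp only [imLine, symm_of_mem_H2 hτ]
  · rw [im_imLine]
    exact mul_pos hw (im_fst_pos hτ)
  · rw [imDet_imLine]
    exact mul_pos (pow_pos hw 2) (imDet_pos hτ)

lemma differentiable_imLine (τ : Fin 2 → Fin 2 → ℂ) : Differentiable ℂ (imLine τ) := by
  unfold imLine
  fun_prop

end ImLine

section LineBound

variable {j : ℕ} {k : ℤ} {ε : Matrix (Fin 4) (Fin 4) ℤ → ℂ}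
  {F : (Fin 2 → Fin 2 → ℂ) → Fin (j + 1) → ℂ} {τ : Fin 2 → Fin 2 → ℂ} {s C : ℝ}

theorem IsSiegelForm.norm_evalForm_mul_exp_le (hε : IsEps ε) (hF : IsSiegelForm j k ε F)
    (hk : Even k) (hk4 : k < 4) (hj : Even j) (hj10 : j ≤ 10) (hτ : τ ∈ reducedSet)
    (hs : 0 < s) (hs1 : s ≤ 1) (x y : ℂ)
    (hC : ∀ w : ℂ, w.im = s → ‖evalForm x y (F (imLine τ w))‖ ≤ C) :
    ‖evalForm x y (F τ)‖ * Real.exp (2.58 * Real.pi * (1 - s)) ≤ C := by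
  obtain ⟨a, ha⟩ := hF.exists_hasFourierExpansion hε
  obtain ⟨hτ, hred, hheight⟩ := hτ
  have imPairing_ge (n : Fin 3 → ℤ) (hn : a n ≠ 0) : 2.58 ≤ imPairing n τ := by
    have := three_mul_im_le_imPairing hred (ha.isOddPosDef hε hF hn).snd_pos.le
      (ha.six_add_abs_le hε hF hk hk4 hj hj10 hn)
    linarith
  set S := ∑' n, ‖qExp n (imLine τ (s * I)) • a n‖
  have decay (w : ℂ) (hw : s ≤ w.im) : ‖evalForm x y (F (imLine τ w))‖ ≤
      ‖evalForm (j := j) x y‖ * S * Real.exp (2.58 * Real.pi * s) *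
        Real.exp (-(2.58 * Real.pi * w.im)) := by
    have im_base : (s * I).im = s := by simp
    have hF_le := ha.norm_le_tsum_mul_exp (c := 2.58 * (w.im - s))
      (imLine_mem_H2 hτ (hs.trans_eq im_base.symm)) (imLine_mem_H2 hτ (hs.trans_le hw))
      fun n hn => by
        rw [imPairing_imLine, imPairing_imLine, im_base]
        nlinarith [imPairing_ge n hn]
    calc _ ≤ ‖evalForm (j := j) x y‖ * (S * Real.exp (-(Real.pi * (2.58 * (w.im - s))))) :=
          (evalForm x y).le_opNorm_of_le hF_le
      _ = _ := by
        rw [mul_assoc, mul_assoc, ← Real.exp_add]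
        ring_nf
  have hdiff : DifferentiableOn ℂ (fun w => evalForm x y (F (imLine τ w))) {w | 0 < w.im} :=
    (evalForm x y).differentiable.comp_differentiableOn
      (hF.differentiableOn.comp (differentiable_imLine τ).differentiableOn
        fun w hw => imLine_mem_H2 hτ hw)
  simpa [imLine_I] using norm_mul_exp_le_of_im_eq hs hdiff decay hC (w := I) (by simpa)

end LineBound

/-! ### The invariant norm -/

section InvariantNorm

variable {h : ℕ} {ε : Matrix (Fin 4) (Fin 4) ℤ → ℂ} {F : (Fin 2 → Fin 2 → ℂ) → Fin (2 * h + 1) → ℂ}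
  {τ : Fin 2 → Fin 2 → ℂ} {x y : ℂ}

/-- The norm of `F τ`, as a binary form of degree `2h` evaluated at `(x, y)`, rescaled so as to be
invariant under `Γ₂` when `F` has weight `(2h, 2)`. -/
def invariantNorm (F : (Fin 2 → Fin 2 → ℂ) → Fin (2 * h + 1) → ℂ) (τ : Fin 2 → Fin 2 → ℂ)
    (x y : ℂ) : ℝ :=
  ‖evalForm x y (F τ)‖ * imDet τ ^ (h + 1) / imForm τ x y ^ h

lemma invariantNorm_nonneg (hτ : τ ∈ H2) (hxy : x ≠ 0 ∨ y ≠ 0) : 0 ≤ invariantNorm F τ x y := by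
  have := imDet_pos hτ
  have := imForm_pos hτ hxy
  rw [invariantNorm]
  positivity

lemma invariantNorm_imLine (F : (Fin 2 → Fin 2 → ℂ) → Fin (2 * h + 1) → ℂ)
    (τ : Fin 2 → Fin 2 → ℂ) {w : ℂ} (hw : w.im ≠ 0) (x y : ℂ) :
    invariantNorm F (imLine τ w) x y = ‖evalForm x y (F (imLine τ w))‖ *
      (w.im ^ (h + 2) * (imDet τ ^ (h + 1) / imForm τ x y ^ h)) := by
  rw [invariantNorm, imDet_imLine, imForm_imLine, mul_pow, mul_pow, ← pow_mul,
    show 2 * (h + 1) = h + (h + 2) by ring, pow_add]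
  field_simp

lemma IsSiegelForm.invariantNorm_moeb (hε : IsEps ε) (hF : IsSiegelForm (2 * h) 2 ε F)
    {γ : Matrix (Fin 4) (Fin 4) ℤ} (hγ : γ ∈ Sp4Z) (hτ : τ ∈ H2) (x y : ℂ) :
    invariantNorm F (moeb γ τ) x y =
      invariantNorm F τ (den γ τ 0 0 * x + den γ τ 1 0 * y)
        (den γ τ 0 1 * x + den γ τ 1 1 * y) := by
  have hD : normSq (den γ τ).det ≠ 0 := normSq_eq_zero.not.2 (det_den_ne_zero hγ hτ)
  have norm_det : ‖(den γ τ).det ^ (2 : ℤ)‖ = normSq (den γ τ).det := by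
    rw [norm_zpow, normSq_eq_norm_sq, zpow_ofNat]
  rw [invariantNorm, invariantNorm, ← imDet_moeb hγ hτ, ← imForm_moeb hγ hτ, hF.map_moeb γ hγ τ hτ,
    map_smul, evalForm_wt, smul_eq_mul, norm_mul, hε.norm_eq_one hγ, one_mul, norm_mul, norm_det,
    mul_pow, mul_pow, pow_succ (normSq _)]
  field_simp

lemma norm_evalForm_le_pow_normSq (x y : ℂ) (v : Fin (2 * h + 1) → ℂ) :
    ‖evalForm x y v‖ ≤ (2 * h + 1) * (‖v‖ * (normSq x + normSq y) ^ h) := by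
  have hx : ‖x‖ ≤ √(normSq x + normSq y) :=
    Real.le_sqrt_of_sq_le (by linarith [normSq_eq_norm_sq x, normSq_nonneg y])
  have hy : ‖y‖ ≤ √(normSq x + normSq y) :=
    Real.le_sqrt_of_sq_le (by linarith [normSq_eq_norm_sq y, normSq_nonneg x])
  simpa [pow_mul, Real.sq_sqrt (add_nonneg (normSq_nonneg x) (normSq_nonneg y))] using
    norm_evalForm_le hx hy v

lemma invariantNorm_le (hτ : τ ∈ H2) (hxy : x ≠ 0 ∨ y ≠ 0) :
    invariantNorm F τ x y ≤ (2 * h + 1) * (‖F τ‖ * imTrace τ ^ (h + 2)) := by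
  have form_pos := imForm_pos hτ hxy
  have det_pos := imDet_pos hτ
  have det_le : imDet τ ≤ imTrace τ ^ 2 := by
    rw [imDet, imTrace]
    nlinarith [im_fst_pos hτ, im_snd_pos hτ, sq_nonneg (τ 0 1).im]
  have normSq_add_nonneg := add_nonneg (normSq_nonneg x) (normSq_nonneg y)
  rw [invariantNorm, div_le_iff₀ (by positivity)]
  calc ‖evalForm x y (F τ)‖ * imDet τ ^ (h + 1)
    _ ≤ (2 * h + 1) * (‖F τ‖ * (normSq x + normSq y) ^ h) * imDet τ ^ (h + 1) := by
      gcongr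
      exact norm_evalForm_le_pow_normSq x y (F τ)
    _ = (2 * h + 1) * (‖F τ‖ * (imDet τ * (imDet τ * (normSq x + normSq y)) ^ h)) := by
      rw [mul_pow]
      ring
    _ ≤ (2 * h + 1) * (‖F τ‖ * (imTrace τ ^ 2 * (imTrace τ * imForm τ x y) ^ h)) := by
      gcongr _ * (_ * (?_ * ?_ ^ _))
      exact imDet_mul_le_imTrace_mul_imForm τ x y
    _ = (2 * h + 1) * (‖F τ‖ * imTrace τ ^ (h + 2)) * imForm τ x y ^ h := by
      rw [mul_pow]
      ring

end InvariantNorm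

section Decay

variable {j : ℕ} {k : ℤ} {ε : Matrix (Fin 4) (Fin 4) ℤ → ℂ}
  {F : (Fin 2 → Fin 2 → ℂ) → Fin (j + 1) → ℂ}

lemma IsSiegelForm.exists_norm_le_exp_imTrace (hε : IsEps ε) (hF : IsSiegelForm j k ε F) :
    ∃ C : ℝ, ∀ τ ∈ reducedSet, ‖F τ‖ ≤ C * Real.exp (-(Real.pi * (imTrace τ / 2))) := by
  obtain ⟨a, ha⟩ := hF.exists_hasFourierExpansion hε
  have base_mem : diagH (I / 4) (I / 4) ∈ H2 := diagH_mem_H2 (by simp) (by simp)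
  refine ⟨(∑' n, ‖qExp n (diagH (I / 4) (I / 4)) • a n‖) * Real.exp (Real.pi / 2), ?_⟩
  rintro τ ⟨hτ, hred, hheight⟩
  have hexp : Real.exp (-(Real.pi * (imTrace τ / 2 - 1 / 2))) =
      Real.exp (Real.pi / 2) * Real.exp (-(Real.pi * (imTrace τ / 2))) := by
    rw [← Real.exp_add]
    ring_nf
  rw [mul_assoc, ← hexp]
  refine ha.norm_le_tsum_mul_exp base_mem hτ fun n hn => ?_
  have hodd := ha.isOddPosDef hε hF hn
  have fst_ge : (1 : ℝ) ≤ n 0 := mod_cast hodd.fst_pos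
  have snd_ge : (1 : ℝ) ≤ n 2 := mod_cast hodd.snd_pos
  have im_fst_ge : 1 / 2 ≤ (τ 0 0).im := by linarith
  have base_eq : imPairing n (diagH (I / 4) (I / 4)) = (n 0 + n 2) / 4 := by
    simp [imPairing, diagH]
    ring
  rw [base_eq, imTrace]
  nlinarith [hodd.add_le_two_mul_imPairing hred,
    mul_nonneg (sub_nonneg.2 fst_ge) (sub_nonneg.2 im_fst_ge),
    mul_nonneg (sub_nonneg.2 snd_ge) (sub_nonneg.2 (im_fst_ge.trans hred.2))]

end Decay

/-! ### Vanishing in weight two -/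

section Vanishing

variable {h : ℕ} {ε : Matrix (Fin 4) (Fin 4) ℤ → ℂ} {F : (Fin 2 → Fin 2 → ℂ) → Fin (2 * h + 1) → ℂ}
  {τ : Fin 2 → Fin 2 → ℂ} {x y : ℂ} {M : ℝ}

lemma pow_le_factorial_mul_exp {t : ℝ} (ht : 0 ≤ t) (n : ℕ) :
    t ^ n ≤ n.factorial * Real.exp (Real.pi * (t / 2)) := by
  have hle := Real.pow_div_factorial_le_exp t ht n
  rw [div_le_iff₀' (by positivity)] at hle
  refine hle.trans ?_
  gcongr
  nlinarith [Real.pi_gt_three]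

namespace IsSiegelForm

lemma exists_mem_reducedSet_invariantNorm_eq (hε : IsEps ε) (hF : IsSiegelForm (2 * h) 2 ε F)
    (hτ : τ ∈ H2) (hxy : x ≠ 0 ∨ y ≠ 0) : ∃ τ' ∈ reducedSet, ∃ x' y' : ℂ,
      (x' ≠ 0 ∨ y' ≠ 0) ∧ invariantNorm F τ' x' y' = invariantNorm F τ x y := by
  obtain ⟨γ, hγ, hred⟩ := exists_moeb_mem_reducedSet hτ
  have hdet := det_den_ne_zero hγ hτ
  rw [det_fin_two] at hdet
  set m := den γ τ with hm
  obtain ⟨x', y', hx, hy⟩ : ∃ x' y', m 0 0 * x' + m 1 0 * y' = x ∧ m 0 1 * x' + m 1 1 * y' = y := by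
    refine ⟨(m 1 1 * x - m 1 0 * y) / (m 0 0 * m 1 1 - m 0 1 * m 1 0),
      (m 0 0 * y - m 0 1 * x) / (m 0 0 * m 1 1 - m 0 1 * m 1 0), ?_, ?_⟩ <;>
    · rw [mul_div_assoc', mul_div_assoc', ← add_div, div_eq_iff hdet]
      ring
  refine ⟨moeb γ τ, hred, x', y', ?_, ?_⟩
  · contrapose! hxy
    simp [← hx, ← hy, hxy]
  · rw [hF.invariantNorm_moeb hε hγ hτ, ← hm, hx, hy]

lemma exists_invariantNorm_le (hε : IsEps ε) (hF : IsSiegelForm (2 * h) 2 ε F) :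
    ∃ B : ℝ, ∀ τ ∈ H2, ∀ x y : ℂ, (x ≠ 0 ∨ y ≠ 0) → invariantNorm F τ x y ≤ B := by
  obtain ⟨C, hC⟩ := hF.exists_norm_le_exp_imTrace hε
  refine ⟨(2 * h + 1) * (C * (h + 2).factorial), fun τ hτ x y hxy => ?_⟩
  obtain ⟨τ', hτ', x', y', hxy', heq⟩ := hF.exists_mem_reducedSet_invariantNorm_eq hε hτ hxy
  have hCτ := hC τ' hτ'
  have trace_nonneg := (imTrace_pos hτ'.1).le
  have C_nonneg : 0 ≤ C := nonneg_of_mul_nonneg_left ((norm_nonneg _).trans hCτ) (Real.exp_pos _)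
  calc invariantNorm F τ x y
    _ ≤ (2 * h + 1) * (‖F τ'‖ * imTrace τ' ^ (h + 2)) := heq ▸ invariantNorm_le hτ'.1 hxy'
    _ ≤ (2 * h + 1) * (C * Real.exp (-(Real.pi * (imTrace τ' / 2))) *
        ((h + 2).factorial * Real.exp (Real.pi * (imTrace τ' / 2)))) := by
      gcongr
      exact pow_le_factorial_mul_exp trace_nonneg (h + 2)
    _ = (2 * h + 1) * (C * (h + 2).factorial) := by
      rw [mul_mul_mul_comm, ← Real.exp_add, neg_add_cancel, Real.exp_zero, mul_one]

end IsSiegelForm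

lemma one_le_mul_pow_mul_exp :
    1 ≤ (0.95 : ℝ) * (0.9 ^ 7 * Real.exp (2.58 * Real.pi * (1 - 0.9))) := by
  have half_le : 1.487 ≤ Real.exp 0.405 := by
    linarith [Real.quadratic_le_exp_of_nonneg (x := 0.405) (by norm_num)]
  calc (1 : ℝ) ≤ 0.95 * (0.9 ^ 7 * 1.487 ^ 2) := by norm_num
    _ ≤ 0.95 * (0.9 ^ 7 * Real.exp 0.405 ^ 2) := by gcongr
    _ = 0.95 * (0.9 ^ 7 * Real.exp 0.81) := by
      rw [← Real.exp_nat_mul]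
      norm_num
    _ ≤ 0.95 * (0.9 ^ 7 * Real.exp (2.58 * Real.pi * (1 - 0.9))) := by
      gcongr
      linarith [Real.pi_gt_d6]

namespace IsSiegelForm

/-- On `ℍ₂` it suffices to consider reduced points, where the Phragmén–Lindelöf bound compares `τ`
with the points of `imLine τ` of height `0.9`. -/
theorem invariantNorm_le_of_le (hε : IsEps ε) (hF : IsSiegelForm (2 * h) 2 ε F) (hh : h ≤ 5)
    (hM : ∀ τ ∈ H2, ∀ x y : ℂ, (x ≠ 0 ∨ y ≠ 0) → invariantNorm F τ x y ≤ M) (hτ : τ ∈ H2)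
    (hxy : x ≠ 0 ∨ y ≠ 0) : invariantNorm F τ x y ≤ 0.95 * M := by
  obtain ⟨τ, hred, x, y, hxy, heq⟩ := hF.exists_mem_reducedSet_invariantNorm_eq hε hτ hxy
  rw [← heq]
  have hτ := hred.1
  have form_pos := imForm_pos hτ hxy
  have det_pos := imDet_pos hτ
  set R := imDet τ ^ (h + 1) / imForm τ x y ^ h with hR
  have : 0 < R := by positivity
  have hline := hF.norm_evalForm_mul_exp_le hε even_two (by norm_num) (even_two_mul h) (by lia) hred
    (s := 0.9) (C := M / (0.9 ^ (h + 2) * R)) (by norm_num) (by norm_num) x y fun w hw => by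
      rw [le_div_iff₀ (by positivity), ← hw, ← invariantNorm_imLine F τ (by norm_num [hw])]
      exact hM _ (imLine_mem_H2 hτ (by norm_num [hw])) x y hxy
  rw [le_div_iff₀ (by positivity)] at hline
  set E := Real.exp (2.58 * Real.pi * (1 - 0.9))
  have h_nonneg := invariantNorm_nonneg (F := F) hτ hxy
  calc invariantNorm F τ x y
    _ ≤ invariantNorm F τ x y * (0.95 * (0.9 ^ 7 * E)) :=
      le_mul_of_one_le_right h_nonneg one_le_mul_pow_mul_exp
    _ ≤ invariantNorm F τ x y * (0.95 * (0.9 ^ (h + 2) * E)) := by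
      gcongr ?_ * (_ * (?_ * _))
      exact pow_le_pow_of_le_one (by norm_num) (by norm_num) (by lia)
    _ = 0.95 * (‖evalForm x y (F τ)‖ * E * (0.9 ^ (h + 2) * R)) := by
      rw [invariantNorm, mul_div_assoc, ← hR]
      ring
    _ ≤ 0.95 * M := by gcongr

lemma invariantNorm_nonpos (hε : IsEps ε) (hF : IsSiegelForm (2 * h) 2 ε F) (hh : h ≤ 5)
    (hτ : τ ∈ H2) (hxy : x ≠ 0 ∨ y ≠ 0) : invariantNorm F τ x y ≤ 0 := by
  obtain ⟨B, hB⟩ := hF.exists_invariantNorm_le hε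
  have hpow (n : ℕ) : ∀ τ ∈ H2, ∀ x y : ℂ, (x ≠ 0 ∨ y ≠ 0) →
      invariantNorm F τ x y ≤ 0.95 ^ n * B := by
    induction n with
    | zero => simpa using hB
    | succ n ih =>
      rw [pow_succ', mul_assoc]
      exact fun τ hτ x y hxy => hF.invariantNorm_le_of_le hε hh ih hτ hxy
  have hlim := (tendsto_pow_atTop_nhds_zero_of_lt_one (r := (0.95 : ℝ)) (by norm_num)
    (by norm_num)).mul_const B
  rw [zero_mul] at hlim
  exact ge_of_tendsto' hlim fun n => hpow n τ hτ x y hxy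

end IsSiegelForm

end Vanishing

theorem vanishing_Sj2_eps_small_general {ε : Matrix (Fin 4) (Fin 4) ℤ → ℂ} (hε : IsEps ε) {j : ℕ}
    (hj : Even j) (hj10 : j ≤ 10) {F : (Fin 2 → Fin 2 → ℂ) → Fin (j + 1) → ℂ}
    (hF : IsSiegelForm j 2 ε F) {τ : Fin 2 → Fin 2 → ℂ} (hτ : τ ∈ H2) : F τ = 0 := by
  obtain ⟨h, rfl⟩ := hj.two_dvd
  refine evalForm_ext fun t => ?_
  have ht : (1 : ℂ) ≠ 0 ∨ t ≠ 0 := .inl one_ne_zero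
  have form_pos := imForm_pos hτ ht
  have det_pos := imDet_pos hτ
  have hnorm := (hF.invariantNorm_nonpos hε (by lia) hτ ht).antisymm (invariantNorm_nonneg hτ ht)
  have hzero : ‖evalForm 1 t (F τ)‖ = 0 := by
    rw [invariantNorm] at hnorm
    simpa [form_pos.ne', det_pos.ne'] using hnorm
  rw [map_zero, norm_eq_zero.1 hzero]

/-- For `j = 0, 2, 4, 6, 8` and `10`, the space `S_{j,2}(Γ₂,ε)` is zero. -/
theorem vanishing_Sj2_eps_small (ε : Matrix (Fin 4) (Fin 4) ℤ → ℂ) (hε : IsEps ε)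
    (j : ℕ) (hj : j = 0 ∨ j = 2 ∨ j = 4 ∨ j = 6 ∨ j = 8 ∨ j = 10) :
    SiegelCusp j 2 Sp4Z ε = ⊥ := by
  refine (Submodule.eq_bot_iff _).2 fun F hF => funext fun τ => ?_
  by_cases hτ : τ ∈ H2
  · exact vanishing_Sj2_eps_small_general hε (Nat.even_iff.2 (by lia)) (by lia) ⟨hF.1, hF.2.1⟩ hτ
  · exact hF.2.2.2 τ hτ
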